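/- arXiv:1101.5107 — 14 statements merged into one kernel-verified Lean document; each statement's English description precedes it below -/
import Mathlib

section
/- Let R be a ring, a a two-sided ideal of R, and let S₁ and S₂ be left denominator sets of R with ass(S₁) = ass(S₂) = a. Then the multiplicative sub-semigroup S₁S₂ of (R,·) generated by S₁ ∪ S₂ is again a left denominator set of R with ass(S₁S₂) = a; moreover S₁S₂ = S₂S₁, and S₁ ⊆ S₂ implies S₁S₃ ⊆ S₂S₃ for any S₃ with ass(S₃) = a. -/
/-! Every element of a left denominator set `S` with `ass S = a` is cancellable modulo `a` on both
sides (`IsLeftDen.mul_left_cancel` and `IsLeftDen.mul_right_cancel`), and cancellability modulo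
`a` passes to products. Hence every element `t` of the submonoid `T` generated by `S₁ ∪ S₂` is
cancellable modulo `a`. If `t * r = 0` or `r * t = 0`, then `r ∈ a`, so `r` is killed on the left
by an element of `S₁ ⊆ T`; this gives `ass T = a` and the denominator condition. Also `0 ∉ T`,
since otherwise `1 ∈ a = ass S₁` and `0 ∈ S₁`. The left Ore condition passes to products as well,
so it suffices to have it for the generators, where it is part of the hypotheses
(`leftOre_closure`). The remaining two claims are formal properties of generated submonoids. -/

/-! Basic notions from the paper "The largest left quotient ring of a ring"
(V. V. Bavula): multiplicative sets, left Ore sets, left denominator sets,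
`ass S`, and an abstract characterization of the left Ore localization. -/

universe u

namespace BavulaLQR

variable {R : Type*}

/-- A multiplicative set: contains `1`, does not contain `0`, closed under `*`. -/
def IsMulSet [Ring R] (S : Set R) : Prop :=
  (1 : R) ∈ S ∧ (0 : R) ∉ S ∧ ∀ s ∈ S, ∀ t ∈ S, s * t ∈ S

/-- A left Ore set: a multiplicative set satisfying the left Ore condition. -/
def IsLeftOre [Ring R] (S : Set R) : Prop :=
  IsMulSet S ∧ ∀ (r : R), ∀ s ∈ S, ∃ r' : R, ∃ s' ∈ S, s' * r = r' * s

/-- `ass S = {r | s * r = 0 for some s ∈ S}`. -/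
def assSet [Ring R] (S : Set R) : Set R := {r : R | ∃ s ∈ S, s * r = 0}

/-- The right-sided analogue of `assSet`. -/
def assRSet [Ring R] (S : Set R) : Set R := {r : R | ∃ s ∈ S, r * s = 0}

/-- A left denominator set. -/
def IsLeftDen [Ring R] (S : Set R) : Prop :=
  IsLeftOre S ∧ ∀ (r : R), ∀ s ∈ S, r * s = 0 → ∃ t ∈ S, t * r = 0

/-- A right Ore set. -/
def IsRightOre [Ring R] (S : Set R) : Prop :=
  IsMulSet S ∧ ∀ (r : R), ∀ s ∈ S, ∃ r' : R, ∃ s' ∈ S, r * s' = s * r'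

/-- A right denominator set. -/
def IsRightDen [Ring R] (S : Set R) : Prop :=
  IsRightOre S ∧ ∀ (r : R), ∀ s ∈ S, s * r = 0 → ∃ t ∈ S, r * t = 0

/-- `f : R →+* Q` is a left localization of `R` at `S`: every `f s` is a unit,
every element of `Q` is of the form `(f s)⁻¹ * f r`, and `ker f = ass S`. -/
def IsLeftLocalization [Ring R] (S : Set R) {Q : Type*} [Ring Q] (f : R →+* Q) : Prop :=
  (∀ s ∈ S, IsUnit (f s)) ∧
  (∀ q : Q, ∃ s ∈ S, ∃ r : R, f s * q = f r) ∧
  (∀ r : R, f r = 0 ↔ r ∈ assSet S)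

/-- `f : R →+* Q` is a right localization of `R` at `S`. -/
def IsRightLocalization [Ring R] (S : Set R) {Q : Type*} [Ring Q] (f : R →+* Q) : Prop :=
  (∀ s ∈ S, IsUnit (f s)) ∧
  (∀ q : Q, ∃ s ∈ S, ∃ r : R, q * f s = f r) ∧
  (∀ r : R, f r = 0 ↔ r ∈ assRSet S)

/-- `S_a(R)`: the union of all left denominator sets `S` with `ass S = a`. -/
def largestLeftDen [Ring R] (a : Set R) : Set R :=
  {x : R | ∃ S : Set R, (IsLeftDen S ∧ assSet S = a) ∧ x ∈ S}

/-- `S₀(R)`, the largest left denominator set with `ass = 0`. -/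
def S0 (R : Type*) [Ring R] : Set R := largestLeftDen ({0} : Set R)

end BavulaLQR

namespace BavulaLQR

theorem IsLeftDen.mul_left_cancel {R : Type*} [Ring R] {S : Set R} (h : IsLeftDen S)
    {s r : R} (hs : s ∈ S) (hr : s * r ∈ assSet S) : r ∈ assSet S := by
  obtain ⟨t, ht, e⟩ := hr
  exact ⟨t * s, h.1.1.2.2 t ht s hs, by rw [mul_assoc, e]⟩

theorem IsLeftDen.mul_right_cancel {R : Type*} [Ring R] {S : Set R} (h : IsLeftDen S)
    {s r : R} (hs : s ∈ S) (hr : r * s ∈ assSet S) : r ∈ assSet S := by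
  obtain ⟨t, ht, e⟩ := hr
  obtain ⟨u, hu, e'⟩ := h.2 (t * r) s hs (by rw [mul_assoc, e])
  exact ⟨u * t, h.1.1.2.2 u hu t ht, by rw [mul_assoc, e']⟩

/-- The left Ore condition for a generated submonoid only has to be checked on generators. -/
theorem leftOre_closure {R : Type*} [Ring R] {X : Set R}
    (hX : ∀ (r : R), ∀ s ∈ X, ∃ r' : R, ∃ s' ∈ Submonoid.closure X, s' * r = r' * s)
    (s : R) (hs : s ∈ Submonoid.closure X) :
    ∀ r : R, ∃ r' : R, ∃ s' ∈ Submonoid.closure X, s' * r = r' * s := by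
  induction hs using Submonoid.closure_induction with
  | mem x hx => exact fun r => hX r x hx
  | one => exact fun r => ⟨r, 1, one_mem _, by simp⟩
  | mul x y _ _ ihx ihy =>
    intro r
    obtain ⟨r', s', hs', e⟩ := ihy r
    obtain ⟨r'', s'', hs'', e'⟩ := ihx r'
    exact ⟨r'', s'' * s', mul_mem hs'' hs', by rw [mul_assoc, e, ← mul_assoc, e', mul_assoc]⟩

/-- Theorem 2.1.(1) of the paper. If `S₁, S₂` are left denominator
sets of `R` with `ass S₁ = ass S₂ = a`, then the multiplicative sub-semigroup
`S₁S₂` generated by `S₁ ∪ S₂` is again a left denominator set with `ass = a`;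
moreover `S₁S₂ = S₂S₁`, and `S₁ ⊆ S₂` implies `S₁S₃ ⊆ S₂S₃`. -/
theorem denominator_semigroup_product {R : Type u} [Ring R] (a : TwoSidedIdeal R)
    (S₁ S₂ : Set R)
    (h₁ : IsLeftDen S₁ ∧ assSet S₁ = (a : Set R))
    (h₂ : IsLeftDen S₂ ∧ assSet S₂ = (a : Set R)) :
    (IsLeftDen (↑(Submonoid.closure (S₁ ∪ S₂)) : Set R) ∧
      assSet (↑(Submonoid.closure (S₁ ∪ S₂)) : Set R) = (a : Set R)) ∧
    (↑(Submonoid.closure (S₁ ∪ S₂)) : Set R) = (↑(Submonoid.closure (S₂ ∪ S₁)) : Set R) ∧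
    (∀ S₃ : Set R, IsLeftDen S₃ ∧ assSet S₃ = (a : Set R) → S₁ ⊆ S₂ →
      (↑(Submonoid.closure (S₁ ∪ S₃)) : Set R) ⊆ (↑(Submonoid.closure (S₂ ∪ S₃)) : Set R)) := by
  obtain ⟨d₁, e₁⟩ := h₁
  obtain ⟨d₂, e₂⟩ := h₂
  have sub₁ : ∀ x ∈ S₁, x ∈ Submonoid.closure (S₁ ∪ S₂) :=
    fun x hx => Submonoid.subset_closure (Or.inl hx)
  have sub₂ : ∀ x ∈ S₂, x ∈ Submonoid.closure (S₁ ∪ S₂) :=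
    fun x hx => Submonoid.subset_closure (Or.inr hx)
  have cancel : ∀ t ∈ Submonoid.closure (S₁ ∪ S₂), ∀ r : R,
      (t * r ∈ (a : Set R) → r ∈ (a : Set R)) ∧ (r * t ∈ (a : Set R) → r ∈ (a : Set R)) := by
    intro t ht
    induction ht using Submonoid.closure_induction with
    | mem x hx =>
      intro r
      rcases hx with hx | hx
      · rw [← e₁]
        exact ⟨d₁.mul_left_cancel hx, d₁.mul_right_cancel hx⟩
      · rw [← e₂]
        exact ⟨d₂.mul_left_cancel hx, d₂.mul_right_cancel hx⟩
    | one => intro r; simp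
    | mul x y _ _ ihx ihy =>
      intro r
      refine ⟨fun h => (ihy r).1 ((ihx _).1 ?_), fun h => (ihx r).2 ((ihy _).2 ?_)⟩
      · rwa [← mul_assoc]
      · rwa [mul_assoc]
  have zero_mem_a : (0 : R) ∈ (a : Set R) := a.zero_mem
  have killed : ∀ r ∈ (a : Set R), ∃ t ∈ Submonoid.closure (S₁ ∪ S₂), t * r = 0 := by
    intro r hr
    rw [← e₁] at hr
    obtain ⟨t, ht, e⟩ := hr
    exact ⟨t, sub₁ t ht, e⟩
  have ore : ∀ (r : R), ∀ s ∈ S₁ ∪ S₂,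
      ∃ r' : R, ∃ s' ∈ Submonoid.closure (S₁ ∪ S₂), s' * r = r' * s := by
    rintro r s (hs | hs)
    · obtain ⟨r', s', hs', e⟩ := d₁.1.2 r s hs
      exact ⟨r', s', sub₁ s' hs', e⟩
    · obtain ⟨r', s', hs', e⟩ := d₂.1.2 r s hs
      exact ⟨r', s', sub₂ s' hs', e⟩
  refine ⟨⟨⟨⟨⟨one_mem _, ?_, fun s hs t ht => mul_mem hs ht⟩,
    fun r s hs => leftOre_closure ore s hs r⟩, ?_⟩, ?_⟩, ?_, ?_⟩
  · intro h0
    have h1 : (1 : R) ∈ (a : Set R) := (cancel 0 h0 1).1 (by rwa [zero_mul])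
    rw [← e₁] at h1
    obtain ⟨s, hs, e⟩ := h1
    rw [mul_one] at e
    exact d₁.1.1.2.1 (e ▸ hs)
  · intro r s hs e
    exact killed r ((cancel s hs r).2 (by rwa [e]))
  · ext r
    refine ⟨?_, fun hr => killed r hr⟩
    rintro ⟨s, hs, e⟩
    exact (cancel s hs r).1 (by rwa [e])
  · rw [Set.union_comm]
  · intro S₃ _ h
    exact Submonoid.closure_mono (Set.union_subset_union_left _ h)

end BavulaLQR
end

section
/- Let R be a ring and a a two-sided ideal of R such that Den_l(R, a) is nonempty. Then S_a(R) := ⋃_{S ∈ Den_l(R,a)} S is itself a left denominator set of R with ass(S_a(R)) = a; it is the largest element of the poset (Den_l(R, a), ⊆). More generally, for any nonempty family {S_i}_{i ∈ I} ⊆ Den_l(R, a), the multiplicative sub-semigroup of (R,·) generated by ⋃_{i ∈ I} S_i belongs to Den_l(R, a) and is the least upper bound of {S_i}_{i ∈ I} in (Den_l(R, a), ⊆). -/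
/-! Everything reduces to one fact: for a nonempty family `Si` in `Den_l(R, a)`, the submonoid `C`
generated by `⋃ i, Si i` is again in `Den_l(R, a)`.

Each of the following properties of `x ∈ R` holds for `x ∈ Si i` and is stable under products,
hence holds on `C`:
* the left Ore condition: every `r` admits `s' ∈ C` with `s' * r ∈ R * x`;
* `x * r ∈ a → r ∈ a` for all `r`;
* `r * x ∈ a → r ∈ a` for all `r`.

The second gives `ass C ⊆ a` and, as `1 ∉ a`, also `0 ∉ C`; the reverse inclusion `a ⊆ ass C` holds
since `C` contains some `Si i`. The third, together with `a = ass C`, is the denominator condition.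
Applied to the family of all members of `Den_l(R, a)`, the submonoid `C` belongs to the family
itself, so it coincides with the union `S_a(R)`. -/

/-! Basic notions from the paper "The largest left quotient ring of a ring"
(V. V. Bavula): multiplicative sets, left Ore sets, left denominator sets,
`ass S`, and an abstract characterization of the left Ore localization. -/

universe u

namespace BavulaLQR

/-- Elements of a member of `Den_l(R, a)` are left regular modulo `a`. -/
lemma mem_of_mul_left_mem {R : Type*} [Ring R] {a S : Set R} (hS : IsLeftDen S)
    (hass : assSet S = a) {s r : R} (hs : s ∈ S) (h : s * r ∈ a) : r ∈ a := by
  subst hass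
  obtain ⟨t, ht, h0⟩ := h
  exact ⟨t * s, hS.1.1.2.2 t ht s hs, by rw [mul_assoc, h0]⟩

/-- Elements of a member of `Den_l(R, a)` are right regular modulo `a`. -/
lemma mem_of_mul_right_mem {R : Type*} [Ring R] {a S : Set R} (hS : IsLeftDen S)
    (hass : assSet S = a) {s r : R} (hs : s ∈ S) (h : r * s ∈ a) : r ∈ a := by
  subst hass
  obtain ⟨t, ht, h0⟩ := h
  obtain ⟨t', ht', h1⟩ := hS.2 (t * r) s hs (by rw [mul_assoc, h0])
  exact ⟨t' * t, hS.1.1.2.2 t' ht' t ht, by rw [mul_assoc, h1]⟩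

lemma closure_iUnion_mem_den {R : Type*} [Ring R] {a : Set R} {ι : Type*} [Nonempty ι]
    (Si : ι → Set R) (h : ∀ i, IsLeftDen (Si i) ∧ assSet (Si i) = a) :
    IsLeftDen (↑(Submonoid.closure (⋃ i, Si i)) : Set R) ∧
      assSet (↑(Submonoid.closure (⋃ i, Si i)) : Set R) = a := by
  set C := Submonoid.closure (⋃ i, Si i) with hC
  have hsub : ∀ i, ∀ s ∈ Si i, s ∈ C := fun i s hs =>
    Submonoid.subset_closure (Set.mem_iUnion.2 ⟨i, hs⟩)
  obtain ⟨i₀⟩ := ‹Nonempty ι›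
  have hzero : (0 : R) ∈ a := by
    rw [← (h i₀).2]
    exact ⟨1, (h i₀).1.1.1.1, mul_zero 1⟩
  have hone : (1 : R) ∉ a := by
    rw [← (h i₀).2]
    rintro ⟨s, hs, h0⟩
    rw [mul_one] at h0
    exact (h i₀).1.1.1.2.1 (h0 ▸ hs)
  have hore : ∀ x ∈ C, ∀ r : R, ∃ r' : R, ∃ s' ∈ C, s' * r = r' * x := by
    intro x hx
    induction hx using Submonoid.closure_induction with
    | mem x hx =>
      obtain ⟨i, hi⟩ := Set.mem_iUnion.1 hx
      intro r
      obtain ⟨r', s', hs', e⟩ := (h i).1.1.2 r x hi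
      exact ⟨r', s', hsub i s' hs', e⟩
    | one => exact fun r => ⟨r, 1, C.one_mem, by simp⟩
    | mul x y _ _ ihx ihy =>
      intro r
      obtain ⟨r₁, s₁, hs₁, e₁⟩ := ihy r
      obtain ⟨r₂, s₂, hs₂, e₂⟩ := ihx r₁
      exact ⟨r₂, s₂ * s₁, C.mul_mem hs₂ hs₁, by
        rw [mul_assoc, e₁, ← mul_assoc, e₂, mul_assoc]⟩
  have hleft : ∀ x ∈ C, ∀ r : R, x * r ∈ a → r ∈ a := by
    intro x hx
    induction hx using Submonoid.closure_induction with
    | mem x hx =>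
      obtain ⟨i, hi⟩ := Set.mem_iUnion.1 hx
      exact fun r => mem_of_mul_left_mem (h i).1 (h i).2 hi
    | one => exact fun r hr => by simpa using hr
    | mul x y _ _ ihx ihy => exact fun r hr => ihy r (ihx _ (by rwa [← mul_assoc]))
  have hright : ∀ x ∈ C, ∀ r : R, r * x ∈ a → r ∈ a := by
    intro x hx
    induction hx using Submonoid.closure_induction with
    | mem x hx =>
      obtain ⟨i, hi⟩ := Set.mem_iUnion.1 hx
      exact fun r => mem_of_mul_right_mem (h i).1 (h i).2 hi
    | one => exact fun r hr => by simpa using hr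
    | mul x y _ _ ihx ihy => exact fun r hr => ihx r (ihy _ (by rwa [mul_assoc]))
  have hass : ∀ r ∈ a, ∃ t ∈ C, t * r = 0 := by
    intro r hr
    rw [← (h i₀).2] at hr
    obtain ⟨t, ht, e⟩ := hr
    exact ⟨t, hsub i₀ t ht, e⟩
  refine ⟨⟨⟨⟨C.one_mem, fun h0 => ?_, fun s hs t ht => C.mul_mem hs ht⟩,
    fun r s hs => hore s hs r⟩, fun r s hs e => ?_⟩, ?_⟩
  · exact hone (hleft 0 h0 1 (by rwa [zero_mul]))
  · exact hass r (hright s hs r (by rwa [e]))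
  · refine Set.Subset.antisymm ?_ hass
    rintro r ⟨s, hs, e⟩
    exact hleft s hs r (by rwa [e])

/-- Theorem 2.1.(2,3). `S_a(R) = ⋃ {S ∈ Den_l(R,a)}` is the largest
left denominator set with `ass = a`; and the multiplicative sub-semigroup generated by
any nonempty family in `Den_l(R,a)` is its least upper bound in `Den_l(R,a)`. -/
theorem largest_left_denominator_set {R : Type u} [Ring R] (a : TwoSidedIdeal R)
    (hne : ∃ S : Set R, IsLeftDen S ∧ assSet S = (a : Set R)) :
    (IsLeftDen (largestLeftDen (a : Set R)) ∧
      assSet (largestLeftDen (a : Set R)) = (a : Set R) ∧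
      ∀ S : Set R, IsLeftDen S ∧ assSet S = (a : Set R) → S ⊆ largestLeftDen (a : Set R)) ∧
    ∀ (ι : Type u) (_ : Nonempty ι) (Si : ι → Set R),
      (∀ i, IsLeftDen (Si i) ∧ assSet (Si i) = (a : Set R)) →
      (IsLeftDen (↑(Submonoid.closure (⋃ i, Si i)) : Set R) ∧
        assSet (↑(Submonoid.closure (⋃ i, Si i)) : Set R) = (a : Set R)) ∧
      (∀ i, Si i ⊆ (↑(Submonoid.closure (⋃ i, Si i)) : Set R)) ∧
      (∀ T : Set R, IsLeftDen T ∧ assSet T = (a : Set R) → (∀ i, Si i ⊆ T) →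
        (↑(Submonoid.closure (⋃ i, Si i)) : Set R) ⊆ T) := by
  refine ⟨?_, fun ι _ Si h => ⟨closure_iUnion_mem_den Si h,
    fun i s hs => Submonoid.subset_closure (Set.mem_iUnion.2 ⟨i, hs⟩), fun T hT hle => ?_⟩⟩
  · have : Nonempty {S : Set R // IsLeftDen S ∧ assSet S = (a : Set R)} := nonempty_subtype.2 hne
    have hcl := closure_iUnion_mem_den
      (fun S : {S : Set R // IsLeftDen S ∧ assSet S = (a : Set R)} => (S : Set R)) fun S => S.2
    -- The submonoid generated by all members of `Den_l(R, a)` is one of them, hence is their union.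
    have heq : largestLeftDen (a : Set R) = _ := Set.Subset.antisymm
      (fun x ⟨S, hS, hx⟩ => Submonoid.subset_closure (Set.mem_iUnion.2 ⟨⟨S, hS⟩, hx⟩))
      (fun x hx => ⟨_, hcl, hx⟩)
    exact ⟨heq ▸ hcl.1, heq ▸ hcl.2, fun S hS x hx => ⟨S, hS, hx⟩⟩
  · let M : Submonoid R :=
      { carrier := T
        one_mem' := hT.1.1.1.1
        mul_mem' := fun {x y} hx hy => hT.1.1.1.2.2 x hx y hy }
    exact (Submonoid.closure_le (S := M)).2 (Set.iUnion_subset hle)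

end BavulaLQR
end

section
/- Let R be a ring, S ∈ Den_l(R, 0), and identify R with its image in the left localization S⁻¹R. Let T ∈ Den_l(S⁻¹R, 0) be such that S ⊆ T. Then T ∩ R ∈ Den_l(R, 0) and S ⊆ T ∩ R. -/
/-! Since `ass S = 0`, the map `f` is injective, so equations in `R` may be checked in `Q`, where
`T` consists of elements that are regular on both sides. The only real point is the left Ore
condition: an Ore relation `t' * f r = q * f t` in `Q` is multiplied on the left by elements of `S`
until both coefficients lie in `R`; the new coefficient of `f r` stays in `T` because `S ⊆ T`. -/

/-! Basic notions from the paper "The largest left quotient ring of a ring"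
(V. V. Bavula): multiplicative sets, left Ore sets, left denominator sets,
`ass S`, and an abstract characterization of the left Ore localization. -/

universe u

namespace BavulaLQR

/-- Proposition 2.9.(2). Let `S ∈ Den_l(R,0)`, let `f : R → S⁻¹R`
be the localization (so `R` is identified with its image under `f`), and let
`T ∈ Den_l(S⁻¹R, 0)` with `S ⊆ T` (i.e. `f '' S ⊆ T`). Then `T ∩ R` (i.e. `f ⁻¹' T`)
belongs to `Den_l(R, 0)` and contains `S`. -/
theorem contract_denominator_set {R : Type u} [Ring R] (S : Set R)
    (hS : IsLeftDen S ∧ assSet S = ({0} : Set R))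
    (Q : Type u) [Ring Q] (f : R →+* Q) (hf : IsLeftLocalization S f)
    (T : Set Q) (hT : IsLeftDen T ∧ assSet T = ({0} : Set Q))
    (hST : f '' S ⊆ T) :
    (IsLeftDen (f ⁻¹' T) ∧ assSet (f ⁻¹' T) = ({0} : Set R)) ∧ S ⊆ f ⁻¹' T := by
  have h_inj : ∀ a b : R, f a = f b → a = b := by
    intro a b hab
    have h : a - b ∈ assSet S := (hf.2.2 _).1 (by rw [map_sub, hab, sub_self])
    rw [hS.2] at h
    exact sub_eq_zero.1 h
  obtain ⟨⟨⟨⟨h1, h0, hmul⟩, hore⟩, hden⟩, hass⟩ := hT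
  have h_zero : ∀ r : R, f r ∈ assSet T → r = 0 := by
    intro r hr
    rw [hass] at hr
    exact h_inj r 0 (by rw [map_zero]; exact hr)
  have h_one : (1 : R) ∈ f ⁻¹' T := by
    simpa using h1
  have hsub : S ⊆ f ⁻¹' T := fun s hs => hST ⟨s, hs, rfl⟩
  refine ⟨⟨⟨⟨⟨h_one, by simpa using h0, ?_⟩, ?_⟩, ?_⟩, ?_⟩, hsub⟩
  · intro a ha b hb
    rw [Set.mem_preimage, map_mul]
    exact hmul _ ha _ hb
  · intro r t ht
    obtain ⟨q, t', ht', h⟩ := hore (f r) (f t) ht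
    -- Clear the denominator of `q` with `s₁`, then that of `s₁ * t'` with `s₂`.
    obtain ⟨s₁, hs₁, b, hb⟩ := hf.2.1 q
    obtain ⟨s₂, hs₂, c, hc⟩ := hf.2.1 (f s₁ * t')
    refine ⟨s₂ * b, c, ?_, h_inj _ _ ?_⟩
    · rw [Set.mem_preimage, ← hc]
      exact hmul _ (hsub hs₂) _ (hmul _ (hsub hs₁) _ ht')
    · simp only [map_mul, ← hc, ← hb, mul_assoc, h]
  · intro r t ht hrt
    have hr : r = 0 :=
      h_zero r (hden (f r) (f t) ht (by rw [← map_mul, hrt, map_zero]))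
    exact ⟨1, h_one, by rw [hr, mul_zero]⟩
  · ext r
    constructor
    · rintro ⟨t, ht, htr⟩
      exact h_zero r ⟨f t, ht, by rw [← map_mul, htr, map_zero]⟩
    · intro hr
      rw [Set.mem_singleton_iff] at hr
      exact ⟨1, h_one, by rw [hr, mul_zero]⟩

end BavulaLQR
end

section
/- Let R be a ring, S₀(R) its largest left regular denominator set, Q_l(R) := S₀(R)⁻¹R its largest left quotient ring, and Q_l(R)* the group of units of Q_l(R). Then: (1) S₀(Q_l(R)) = Q_l(R)* and S₀(Q_l(R)) ∩ R = S₀(R); (2) the group Q_l(R)* is generated by the sets S₀(R) and S₀(R)⁻¹ := {s⁻¹ : s ∈ S₀(R)}; (3) Q_l(R)* = {s⁻¹t : s, t ∈ S₀(R)}; (4) Q_l(Q_l(R)) = Q_l(R). -/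
/-!
A set belongs to `Den_l(R, 0)` exactly when it is a left Ore set consisting of two-sided regular
elements, because the denominator condition together with `ass = 0` also makes right multiplication
by its elements injective. The submonoid generated by all such sets is again one of them: the left
Ore condition passes from generators to products one factor at a time. Hence `S₀(R)` is itself a
left denominator set with `ass = 0` (`s0_spec`), and `f : R → Q` is injective.

The units of a nonzero ring form such a set, so `Qˣ ⊆ S₀(Q)`, and in particular
`f(S₀(R)) ⊆ S₀(Q)`. Clearing left denominators turns an Ore relation of `S₀(Q)` between elements of
`R` into one inside `R`, so `f⁻¹(S₀(Q))` is a regular left Ore set of `R` and is therefore contained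
in `S₀(R)` (`preimage_s0_subset`). If `q ∈ S₀(Q)` and `f s * q = f r` with `s ∈ S₀(R)`, then
`f r ∈ S₀(Q)`, so `r ∈ S₀(R)`, `f r` is a unit, and so is `q`. This gives `S₀(Q) = Qˣ`; the
remaining claims follow by writing a unit as `(f s)⁻¹ * f r` and observing that `r ∈ S₀(R)`.
-/

/-! Basic notions from the paper "The largest left quotient ring of a ring"
(V. V. Bavula): multiplicative sets, left Ore sets, left denominator sets,
`ass S`, and an abstract characterization of the left Ore localization. -/

universe u

namespace BavulaLQR

/-- A left Ore set all of whose elements are two-sided regular. -/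
def IsRegOre {R : Type*} [Ring R] (S : Set R) : Prop :=
  IsLeftOre S ∧ (∀ s ∈ S, ∀ r : R, s * r = 0 → r = 0) ∧ ∀ s ∈ S, ∀ r : R, r * s = 0 → r = 0

theorem isRegOre_iff {R : Type*} [Ring R] {S : Set R} :
    IsRegOre S ↔ IsLeftDen S ∧ assSet S = {0} := by
  constructor
  · rintro ⟨hO, hl, hr⟩
    refine ⟨⟨hO, fun r s hs h => ⟨1, hO.1.1, ?_⟩⟩, ?_⟩
    · rw [hr s hs r h, mul_zero]
    · ext r
      constructor
      · rintro ⟨s, hs, h⟩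
        exact hl s hs r h
      · rintro rfl
        exact ⟨1, hO.1.1, mul_zero 1⟩
  · rintro ⟨⟨hO, hd⟩, ha⟩
    have hl : ∀ s ∈ S, ∀ r : R, s * r = 0 → r = 0 := fun s hs r h => by
      have : r ∈ assSet S := ⟨s, hs, h⟩
      rwa [ha] at this
    refine ⟨hO, hl, fun s hs r h => ?_⟩
    obtain ⟨t, ht, h'⟩ := hd r s hs h
    exact hl t ht r h'

theorem mem_s0_iff {R : Type*} [Ring R] {x : R} :
    x ∈ S0 R ↔ ∃ S : Set R, IsRegOre S ∧ x ∈ S := by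
  simp only [S0, largestLeftDen, Set.mem_ofPred_eq, isRegOre_iff]

theorem isRegOre_closure {R : Type*} [Ring R] [Nontrivial R] :
    IsRegOre (Submonoid.closure (S0 R) : Set R) := by
  have hreg : ∀ s ∈ Submonoid.closure (S0 R),
      (∀ r : R, s * r = 0 → r = 0) ∧ ∀ r : R, r * s = 0 → r = 0 := by
    intro s hs
    induction hs using Submonoid.closure_induction with
    | mem x hx =>
      obtain ⟨S, hS, hxS⟩ := mem_s0_iff.1 hx
      exact ⟨hS.2.1 x hxS, hS.2.2 x hxS⟩
    | one => simp
    | mul x y _ _ ihx ihy =>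
      refine ⟨fun r h => ihy.1 r (ihx.1 _ ?_), fun r h => ihx.2 r (ihy.2 _ ?_)⟩
      · rwa [← mul_assoc]
      · rwa [mul_assoc]
  refine ⟨⟨⟨one_mem _, fun h => one_ne_zero ((hreg 0 h).1 (1 : R) (zero_mul 1)),
    fun s hs t ht => mul_mem hs ht⟩, ?_⟩, fun s hs => (hreg s hs).1, fun s hs => (hreg s hs).2⟩
  intro r s hs
  induction hs using Submonoid.closure_induction generalizing r with
  | mem x hx =>
    obtain ⟨S, hS, hxS⟩ := mem_s0_iff.1 hx
    obtain ⟨r', s', hs', h⟩ := hS.1.2 r x hxS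
    exact ⟨r', s', Submonoid.subset_closure (mem_s0_iff.2 ⟨S, hS, hs'⟩), h⟩
  | one => exact ⟨r, 1, one_mem _, by simp⟩
  | mul x y _ _ ihx ihy =>
    obtain ⟨r', s', hs', h⟩ := ihy r
    obtain ⟨r'', s'', hs'', h'⟩ := ihx r'
    exact ⟨r'', s'' * s', mul_mem hs'' hs', by
      rw [mul_assoc, h, ← mul_assoc, h', mul_assoc]⟩

theorem s0_spec {R : Type*} [Ring R] [Nontrivial R] : IsRegOre (S0 R) := by
  have h : (Submonoid.closure (S0 R) : Set R) = S0 R :=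
    Set.Subset.antisymm (fun x hx => mem_s0_iff.2 ⟨_, isRegOre_closure, hx⟩)
      Submonoid.subset_closure
  rw [← h]
  exact isRegOre_closure

theorem units_subset_s0 {Q : Type*} [Ring Q] [Nontrivial Q] {q : Q} (hq : IsUnit q) :
    q ∈ S0 Q := by
  refine mem_s0_iff.2 ⟨{q | IsUnit q}, ⟨⟨⟨isUnit_one, not_isUnit_zero, fun s hs t ht =>
    IsUnit.mul hs ht⟩, fun r s hs => ?_⟩, fun s hs r h => (IsUnit.mul_right_eq_zero hs).1 h,
    fun s hs r h => (IsUnit.mul_left_eq_zero hs).1 h⟩, hq⟩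
  obtain ⟨u, rfl⟩ := hs
  exact ⟨r * ↑u⁻¹, 1, isUnit_one, by simp⟩

/-- A ring with a localization at `S₀(R)` is nonzero, since `S₀ = ∅` for the zero ring. -/
theorem nontrivial_source {R Q : Type*} [Ring R] [Ring Q] {f : R →+* Q}
    (hf : IsLeftLocalization (S0 R) f) : Nontrivial R := by
  obtain ⟨s, hs, -⟩ := hf.2.1 0
  obtain ⟨S, hS, hsS⟩ := mem_s0_iff.1 hs
  exact ⟨s, 0, fun h => hS.1.1.2.1 (h ▸ hsS)⟩

theorem localization_injective {R Q : Type*} [Ring R] [Ring Q] {f : R →+* Q}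
    (hf : IsLeftLocalization (S0 R) f) : Function.Injective f := by
  have := nontrivial_source hf
  refine (injective_iff_map_eq_zero f).2 fun r hr => ?_
  obtain ⟨s, hs, h⟩ := (hf.2.2 r).1 hr
  exact s0_spec.2.1 s hs r h

/-- Clearing left denominators in an Ore relation of `S₀(Q)` shows that the preimage of `S₀(Q)` is
a regular left Ore set. -/
theorem preimage_s0_subset {R Q : Type*} [Ring R] [Ring Q] {f : R →+* Q}
    (hf : IsLeftLocalization (S0 R) f) : f ⁻¹' (S0 Q) ⊆ S0 R := by
  have := nontrivial_source hf
  have hinj := localization_injective hf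
  have : Nontrivial Q := hinj.nontrivial
  obtain ⟨⟨⟨h1, h0, hmul⟩, hore⟩, hl, hr⟩ := s0_spec (R := Q)
  refine fun x hx => mem_s0_iff.2 ⟨f ⁻¹' (S0 Q), ⟨⟨⟨?_, ?_, ?_⟩, ?_⟩, ?_, ?_⟩, hx⟩
  · simpa using h1
  · simpa using h0
  · intro s hs t ht
    simpa using hmul _ hs _ ht
  · intro r s hs
    obtain ⟨q', q, hq, h⟩ := hore (f r) (f s) hs
    obtain ⟨s₁, hs₁, a, ha⟩ := hf.2.1 q
    -- A second denominator makes the other coefficient lie in `R` as well.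
    obtain ⟨s₂, hs₂, b, hb⟩ := hf.2.1 (f s₁ * q')
    refine ⟨b, s₂ * a, ?_, hinj ?_⟩
    · change f (s₂ * a) ∈ S0 Q
      rw [map_mul, ← ha]
      exact hmul _ (units_subset_s0 (hf.1 s₂ hs₂)) _
        (hmul _ (units_subset_s0 (hf.1 s₁ hs₁)) _ hq)
    · simp only [map_mul, ← ha, ← hb, mul_assoc, h]
  · intro s hs r h
    exact hinj ((hl _ hs (f r) (by rw [← map_mul, h, map_zero])).trans (map_zero f).symm)
  · intro s hs r h
    exact hinj ((hr _ hs (f r) (by rw [← map_mul, h, map_zero])).trans (map_zero f).symm)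

/-- Theorem 2.8. Properties of the largest left quotient ring
`Q_l(R) = S₀(R)⁻¹R`: here `f : R →+* Q` is the localization of `R` at `S₀(R)`.
(1) `S₀(Q) = Qˣ` and `S₀(Q) ∩ R = S₀(R)`; (2) the group of units of `Q` is
generated by `S₀(R)` and `S₀(R)⁻¹`; (3) every unit is of the form `s⁻¹t` with
`s, t ∈ S₀(R)`; (4) `Q_l(Q_l(R)) = Q_l(R)`, i.e. the identity of `Q` is the
localization of `Q` at `S₀(Q)`. -/
theorem largest_left_quotient_ring_units {R : Type u} [Ring R] (Q : Type u) [Ring Q]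
    (f : R →+* Q) (hf : IsLeftLocalization (S0 R) f) :
    (S0 Q = {q : Q | IsUnit q} ∧ f ⁻¹' (S0 Q) = S0 R) ∧
    (Subgroup.closure {u : Qˣ | ∃ s ∈ S0 R, (u : Q) = f s} = ⊤) ∧
    ({q : Q | IsUnit q} = {q : Q | ∃ s ∈ S0 R, ∃ t ∈ S0 R, f s * q = f t}) ∧
    IsLeftLocalization (S0 Q) (RingHom.id Q) := by
  have := nontrivial_source hf
  have : Nontrivial Q := (localization_injective hf).nontrivial
  have hS0 : S0 Q = {q : Q | IsUnit q} := by
    refine Set.Subset.antisymm (fun q hq => ?_) fun q hq => units_subset_s0 hq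
    obtain ⟨s, hs, r, h⟩ := hf.2.1 q
    have hr : r ∈ S0 R := preimage_s0_subset hf (by
      change f r ∈ S0 Q
      rw [← h]
      exact s0_spec.1.1.2.2 _ (units_subset_s0 (hf.1 s hs)) _ hq)
    have hu : IsUnit (f s * q) := h ▸ hf.1 r hr
    exact (IsUnit.mul_left_iff (hf.1 s hs)).1 hu
  have hpre : f ⁻¹' (S0 Q) = S0 R :=
    Set.Subset.antisymm (preimage_s0_subset hf) fun s hs => units_subset_s0 (hf.1 s hs)
  have hfrac : ∀ q : Q, IsUnit q → ∃ s ∈ S0 R, ∃ t ∈ S0 R, f s * q = f t := by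
    intro q hq
    obtain ⟨s, hs, r, h⟩ := hf.2.1 q
    refine ⟨s, hs, r, ?_, h⟩
    rw [← hpre]
    exact units_subset_s0 (h ▸ (hf.1 s hs).mul hq)
  refine ⟨⟨hS0, hpre⟩, ?_, ?_, ?_, ?_, ?_⟩
  · refine (Subgroup.eq_top_iff' _).2 fun u => ?_
    obtain ⟨s, hs, t, ht, h⟩ := hfrac u u.isUnit
    have e : u = (hf.1 s hs).unit⁻¹ * (hf.1 t ht).unit := by
      rw [eq_inv_mul_iff_mul_eq]
      exact Units.ext h
    rw [e]
    exact mul_mem (inv_mem (Subgroup.subset_closure ⟨s, hs, rfl⟩))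
      (Subgroup.subset_closure ⟨t, ht, rfl⟩)
  · refine Set.Subset.antisymm hfrac ?_
    rintro q ⟨s, hs, t, ht, h⟩
    have hu : IsUnit (f s * q) := h ▸ hf.1 t ht
    exact (IsUnit.mul_left_iff (hf.1 s hs)).1 hu
  · intro s hs
    rw [hS0] at hs
    exact hs
  · exact fun q => ⟨1, units_subset_s0 isUnit_one, q, one_mul q⟩
  · intro r
    rw [(isRegOre_iff.1 s0_spec).2]
    rfl

end BavulaLQR
end

section
/- Let R be a ring and C_R its set of regular elements (elements that are neither left nor right zero divisors). Then Q_l(R) is a semisimple (semisimple Artinian) ring if and only if C_R is a left Ore set (so that the classical left quotient ring Q_cl(R) := C_R⁻¹R exists) and Q_cl(R) is semisimple. If these equivalent conditions hold, then S₀(R) = C_R and Q_l(R) = Q_cl(R). -/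
/-!
If `Q` is semisimple, it is left Artinian. For `c` regular in `R`, right multiplication by `f c`
is an injective endomorphism of the left module `Q` (clear denominators on the left and use that
`f` is injective), hence surjective, so `f c` is a unit (`isUnit_map_of_mem_regSet`). Writing
`f r * (f c)⁻¹` as a left fraction then gives the left Ore condition for the regular elements
(`isLeftOre_regSet`), so they form a left denominator set with zero `ass`. Since `S₀(R)` always
consists of regular elements, it equals `C_R` as soon as `C_R` is left Ore (`S0_eq_regSet`), and
`Q` itself is the classical left quotient ring.

For the converse, `S₀(R) = C_R` makes `Q` and `Q'` two left localizations at the same Ore set.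
Semisimplicity passes between them along the subring of `Q × Q'` of pairs of equal fractions, both
of whose projections are bijective (`isSemisimpleRing_of_isLeftLocalization`).
-/

/-! Basic notions from the paper "The largest left quotient ring of a ring"
(V. V. Bavula): multiplicative sets, left Ore sets, left denominator sets,
`ass S`, and an abstract characterization of the left Ore localization. -/

universe u

namespace BavulaLQR

/-- The set `C_R` of regular elements: neither left nor right zero divisors. -/
def regSet (R : Type*) [Ring R] : Set R :=
  {r : R | (∀ x : R, r * x = 0 → x = 0) ∧ (∀ x : R, x * r = 0 → x = 0)}

theorem S0_subset_regSet {R : Type*} [Ring R] : S0 R ⊆ regSet R := by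
  rintro s ⟨S, ⟨hS, h0⟩, hs⟩
  have key : ∀ x : R, ∀ t ∈ S, t * x = 0 → x = 0 := by
    intro x t ht h
    have hx : x ∈ assSet S := ⟨t, ht, h⟩
    rw [h0] at hx
    exact hx
  refine ⟨fun x h => key x s hs h, fun x h => ?_⟩
  obtain ⟨t, ht, h'⟩ := hS.2 x s hs h
  exact key x t ht h'

theorem assSet_eq_zero {R : Type*} [Ring R] {S : Set R} (h1 : S.Nonempty)
    (hS : S ⊆ regSet R) : assSet S = {0} := by
  ext x
  constructor
  · rintro ⟨s, hs, h⟩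
    exact (hS hs).1 x h
  · rintro rfl
    obtain ⟨s, hs⟩ := h1
    exact ⟨s, hs, mul_zero s⟩

theorem S0_eq_regSet {R : Type*} [Ring R] (h : IsLeftOre (regSet R)) : S0 R = regSet R := by
  refine S0_subset_regSet.antisymm fun c hc => ⟨regSet R, ⟨⟨h, ?_⟩, ?_⟩, hc⟩
  · intro r s hs hrs
    exact ⟨1, h.1.1, by rw [hs.2 r hrs, mul_zero]⟩
  · exact assSet_eq_zero ⟨1, h.1.1⟩ subset_rfl

theorem IsLeftLocalization.nonempty {R Q : Type*} [Ring R] [Ring Q] {S : Set R} {f : R →+* Q}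
    (hf : IsLeftLocalization S f) : S.Nonempty := by
  obtain ⟨s, hs, -⟩ := hf.2.1 0
  exact ⟨s, hs⟩

theorem IsLeftLocalization.injective {R Q : Type*} [Ring R] [Ring Q] {S : Set R} {f : R →+* Q}
    (hf : IsLeftLocalization S f) (hS : S ⊆ regSet R) : Function.Injective f := by
  rw [injective_iff_map_eq_zero]
  intro x hx
  have := (hf.2.2 x).1 hx
  rwa [assSet_eq_zero hf.nonempty hS] at this

/-- A regular element of `R` becomes invertible in a left Artinian left localization of `R` at a
set of regular elements. -/
theorem isUnit_map_of_mem_regSet {R Q : Type*} [Ring R] [Ring Q] [IsArtinianRing Q] {S : Set R}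
    {f : R →+* Q} (hf : IsLeftLocalization S f) (hS : S ⊆ regSet R) {c : R}
    (hc : c ∈ regSet R) : IsUnit (f c) := by
  have hinj := hf.injective hS
  have hreg : ∀ q : Q, q * f c = 0 → q = 0 := by
    intro q hq
    obtain ⟨s, hs, r, hr⟩ := hf.2.1 q
    have hrc : f (r * c) = 0 := by rw [map_mul, ← hr, mul_assoc, hq, mul_zero]
    have hr0 : r = 0 := hc.2 r (hinj (by rw [hrc, map_zero]))
    rw [hr0, map_zero] at hr
    exact (hf.1 s hs).mul_right_eq_zero.1 hr
  have hsurj : Function.Surjective (LinearMap.toSpanSingleton Q Q (f c)) := by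
    apply IsArtinian.surjective_of_injective_endomorphism
    rw [injective_iff_map_eq_zero]
    intro q hq
    exact hreg q (by simpa using hq)
  obtain ⟨y, hy⟩ := hsurj 1
  have hy : y * f c = 1 := by simpa using hy
  have hy' : f c * y = 1 := by
    apply sub_eq_zero.1
    apply hreg
    rw [sub_mul, mul_assoc, hy, mul_one, one_mul, sub_self]
  exact ⟨⟨f c, y, hy', hy⟩, rfl⟩

theorem isLeftOre_regSet {R Q : Type*} [Ring R] [Ring Q] [IsArtinianRing Q] [Nontrivial R]
    {S : Set R} {f : R →+* Q} (hf : IsLeftLocalization S f) (hS : S ⊆ regSet R) :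
    IsLeftOre (regSet R) := by
  refine ⟨⟨⟨fun x h => by simpa using h, fun x h => by simpa using h⟩, ?_, ?_⟩, ?_⟩
  · intro h
    exact one_ne_zero (h.1 1 (zero_mul 1))
  · intro s hs t ht
    refine ⟨fun x h => ht.1 x (hs.1 _ (by rwa [← mul_assoc])),
      fun x h => hs.2 x (ht.2 _ (by rwa [mul_assoc]))⟩
  · intro r c hc
    obtain ⟨u, hu⟩ := isUnit_map_of_mem_regSet hf hS hc
    -- Rewrite the right fraction `r c⁻¹` as a left fraction `s⁻¹ r'`.
    obtain ⟨s, hs, r', h⟩ := hf.2.1 (f r * ↑u⁻¹)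
    refine ⟨r', s, hS hs, hf.injective hS ?_⟩
    rw [map_mul, map_mul, ← h, ← hu, mul_assoc, mul_assoc, Units.inv_mul, mul_one]

/-- Product of left fractions: `(s⁻¹ r)(s'⁻¹ r') = (t s)⁻¹ (a r')` when `t r = a s'`. -/
theorem frac_mul {R T : Type*} [Ring R] [Ring T] (φ : R →+* T) {s r s' r' a t : R}
    (hta : t * r = a * s') {x x' : T} (h : φ s * x = φ r) (h' : φ s' * x' = φ r') :
    φ (t * s) * (x * x') = φ (a * r') := by
  rw [map_mul, map_mul, ← h', ← mul_assoc (φ a), ← map_mul φ a, ← hta, map_mul, ← h]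
  simp only [mul_assoc]

/-- Sum of left fractions: `s⁻¹ r + s'⁻¹ r' = (t s)⁻¹ (t r + a r')` when `t s = a s'`. -/
theorem frac_add {R T : Type*} [Ring R] [Ring T] (φ : R →+* T) {s r s' r' a t : R}
    (hta : t * s = a * s') {x x' : T} (h : φ s * x = φ r) (h' : φ s' * x' = φ r') :
    φ (t * s) * (x + x') = φ (t * r + a * r') := by
  rw [mul_add, map_add, map_mul φ t r, map_mul φ a r', ← h, ← h', ← mul_assoc, ← mul_assoc,
    ← map_mul, ← map_mul, ← hta]

/-- Given two left localizations of `R` at the same left Ore set, the subring of `Q × Q'` of the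
pairs whose two components are represented by one and the same fraction `s⁻¹ r`. -/
def fractionGraph {R Q Q' : Type*} [Ring R] [Ring Q] [Ring Q'] {S : Set R} (hS : IsLeftOre S)
    (f : R →+* Q) (g : R →+* Q') : Subring (Q × Q') where
  carrier := {p | ∃ s ∈ S, ∃ r : R, f s * p.1 = f r ∧ g s * p.2 = g r}
  one_mem' := ⟨1, hS.1.1, 1, by simp, by simp⟩
  zero_mem' := ⟨1, hS.1.1, 0, by simp, by simp⟩
  neg_mem' := by
    rintro p ⟨s, hs, r, h, h'⟩
    exact ⟨s, hs, -r, by simp [h], by simp [h']⟩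
  mul_mem' := by
    rintro p p' ⟨s, hs, r, h1, h2⟩ ⟨s', hs', r', k1, k2⟩
    obtain ⟨a, t, ht, hta⟩ := hS.2 r s' hs'
    exact ⟨t * s, hS.1.2.2 t ht s hs, a * r', frac_mul f hta h1 k1, frac_mul g hta h2 k2⟩
  add_mem' := by
    rintro p p' ⟨s, hs, r, h1, h2⟩ ⟨s', hs', r', k1, k2⟩
    obtain ⟨a, t, ht, hta⟩ := hS.2 s s' hs'
    exact ⟨t * s, hS.1.2.2 t ht s hs, t * r + a * r', frac_add f hta h1 k1,
      frac_add g hta h2 k2⟩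

/-- Two left localizations at the same left Ore set are isomorphic, so semisimplicity of one
implies that of the other. -/
theorem isSemisimpleRing_of_isLeftLocalization {R Q Q' : Type*} [Ring R] [Ring Q] [Ring Q']
    {S : Set R} (hS : IsLeftOre S) {f : R →+* Q} {g : R →+* Q'} (hf : IsLeftLocalization S f)
    (hg : IsLeftLocalization S g) [IsSemisimpleRing Q'] : IsSemisimpleRing Q := by
  let T := fractionGraph hS f g
  let p₁ : T →+* Q := (RingHom.fst Q Q').comp T.subtype
  let p₂ : T →+* Q' := (RingHom.snd Q Q').comp T.subtype
  have h₁ : Function.Surjective p₁ := by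
    intro q
    obtain ⟨s, hs, r, h⟩ := hf.2.1 q
    obtain ⟨u, hu⟩ := hg.1 s hs
    exact ⟨⟨(q, ↑u⁻¹ * g r), s, hs, r, h, by rw [← hu, Units.mul_inv_cancel_left]⟩, rfl⟩
  have h₂ : Function.Surjective p₂ := by
    intro q
    obtain ⟨s, hs, r, h⟩ := hg.2.1 q
    obtain ⟨u, hu⟩ := hf.1 s hs
    exact ⟨⟨(↑u⁻¹ * f r, q), s, hs, r, by rw [← hu, Units.mul_inv_cancel_left], h⟩, rfl⟩
  have h₂' : Function.Injective p₂ := by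
    rw [injective_iff_map_eq_zero]
    rintro ⟨⟨q, q'⟩, s, hs, r, h, h'⟩ (hq : q' = 0)
    subst hq
    -- A numerator killed by `g` lies in `ass S`, hence is killed by `f` as well.
    have hr : f r = 0 := (hf.2.2 r).2 ((hg.2.2 r).1 (by rw [← h']; exact mul_zero _))
    have hq : q = 0 := (hf.1 s hs).mul_right_eq_zero.1 (h.trans hr)
    subst hq
    rfl
  have : IsSemisimpleRing T := (RingEquiv.ofBijective p₂ ⟨h₂', h₂⟩).symm.isSemisimpleRing
  exact p₁.isSemisimpleRing_of_surjective h₁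

/-- Theorem 2.10. Let `f : R →+* Q` be the localization of `R` at
`S₀(R)`, i.e. `Q = Q_l(R)`. Then `Q_l(R)` is semisimple iff `C_R` is a left Ore set
(so `Q_cl(R) = C_R⁻¹R` exists) and `Q_cl(R)` is semisimple. In that case
`S₀(R) = C_R` and `Q_l(R) = Q_cl(R)`. -/
theorem largest_left_quotient_semisimple_iff {R : Type u} [Ring R] (Q : Type u) [Ring Q]
    (f : R →+* Q) (hf : IsLeftLocalization (S0 R) f) :
    (IsSemisimpleRing Q ↔
      (IsLeftOre (regSet R) ∧
        ∃ (Q' : Type u) (_ : Ring Q') (g : R →+* Q'),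
          IsLeftLocalization (regSet R) g ∧ IsSemisimpleRing Q')) ∧
    (IsSemisimpleRing Q →
      S0 R = regSet R ∧ IsLeftLocalization (regSet R) f) := by
  have hS := S0_subset_regSet (R := R)
  have : Nontrivial R := by
    obtain ⟨_, S, ⟨hS, -⟩, -⟩ := hf.nonempty
    exact ⟨1, 0, fun h => hS.1.1.2.1 (h ▸ hS.1.1.1)⟩
  have hOre (_ : IsSemisimpleRing Q) : IsLeftOre (regSet R) := isLeftOre_regSet hf hS
  have hloc (h : IsLeftOre (regSet R)) : IsLeftLocalization (regSet R) f :=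
    S0_eq_regSet h ▸ hf
  refine ⟨⟨fun h => ⟨hOre h, Q, inferInstance, f, hloc (hOre h), h⟩, ?_⟩,
    fun h => ⟨S0_eq_regSet (hOre h), hloc (hOre h)⟩⟩
  rintro ⟨h, Q', _, g, hg, _⟩
  exact isSemisimpleRing_of_isLeftLocalization h (hloc h) hg

end BavulaLQR
end

section
/- Let R be a ring. If there exists a finitely generated flat left R-module that is not projective, then the ring Q_l(R) is not semisimple; equivalently, there is no left denominator set S of R consisting of regular elements such that S⁻¹R is a semisimple (semisimple Artinian) ring. -/
/-!
Write `M = F / K` with `F = Rⁿ`. Flatness of `M` means (Villamayor) that every finite subset of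
`K` is fixed pointwise by some endomorphism `θ` of `F` with image in `K`
(`exists_endo_fixing_list`); projectivity of `M` follows once a single such `θ` fixes all of `K`
(`projective_of_endo_fixing_ker`).

Suppose `R` embeds in a left Noetherian ring `Q`, for instance a semisimple one. The `Q`-submodule
of `Qⁿ` generated by the image of `K` is generated by the images of finitely many elements of `K`.
Take `θ` fixing these. Being right multiplication by a matrix over `R`, it extends to a `Q`-linear
endomorphism of `Qⁿ`, which is the identity on the generators, hence on the image of `K`; so `θ` is
the identity on `K` and `M` is projective (`projective_of_injective_noetherian`). Both rings of
fractions in the theorem are localizations at a set `S` with `ass S = 0`, so `R` embeds in them.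
-/


/-! Basic notions from the paper "The largest left quotient ring of a ring"
(V. V. Bavula): multiplicative sets, left Ore sets, left denominator sets,
`ass S`, and an abstract characterization of the left Ore localization. -/

universe u

namespace BavulaLQR

/-- A left module `M` over a (possibly noncommutative) ring `R` is flat, phrased via
the standard equational criterion (which over any ring is equivalent to exactness of
`- ⊗_R M`): whenever `∑ i, r i • x i = 0`, the `x i` factor through a finite free
module in a way that kills the relation. -/
def IsFlatLeftModule (R : Type u) (M : Type u) [Ring R] [AddCommGroup M] [Module R M] :
    Prop :=
  ∀ (n : ℕ) (r : Fin n → R) (x : Fin n → M), (∑ i, r i • x i) = 0 →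
    ∃ (m : ℕ) (A : Fin n → Fin m → R) (y : Fin m → M),
      (∀ i, x i = ∑ j, A i j • y j) ∧ ∀ j, (∑ i, r i * A i j) = 0

section Villamayor

variable {R : Type u} [Ring R] {M : Type u} [AddCommGroup M] [Module R M]

/-- Villamayor's criterion for one element of the kernel. -/
lemma exists_endo_fixing (hflat : IsFlatLeftModule R M) {n : ℕ} (π : (Fin n → R) →ₗ[R] M)
    (hπ : Function.Surjective π) (k : Fin n → R) (hk : π k = 0) :
    ∃ θ : (Fin n → R) →ₗ[R] (Fin n → R), (∀ x, π (θ x) = 0) ∧ θ k = k := by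
  have hsum : ∀ x : Fin n → R, π x = ∑ i, x i • π (Pi.single i 1) := fun x =>
    by
    rw [LinearMap.pi_apply_eq_sum_univ π x]
    refine Finset.sum_congr rfl fun i _ => ?_
    congr 2
    ext j
    simp [Pi.single_apply, eq_comm]
  obtain ⟨m, A, y, hx, hA⟩ := hflat n k (fun i => π (Pi.single i 1)) (by rw [← hsum, hk])
  choose z hz using fun j => hπ (y j)
  -- `δ = 1 - θ` sends the basis vector `e i` to `∑ j, A i j • z j`, a lift of `π (e i)`.
  let δ : (Fin n → R) →ₗ[R] (Fin n → R) :=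
    Fintype.linearCombination R (fun i => ∑ j, A i j • z j)
  have hδ : ∀ x, δ x = ∑ i, x i • ∑ j, A i j • z j := fun x => rfl
  refine ⟨LinearMap.id - δ, fun x => ?_, ?_⟩
  · rw [LinearMap.sub_apply, map_sub, hδ, LinearMap.id_apply, sub_eq_zero, hsum x, map_sum]
    refine Finset.sum_congr rfl fun i _ => ?_
    rw [map_smul, map_sum, hx i]
    simp only [map_smul, hz]
  · rw [LinearMap.sub_apply, LinearMap.id_apply, sub_eq_self, hδ]
    simp only [Finset.smul_sum, smul_smul]
    rw [Finset.sum_comm]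
    simp only [← Finset.sum_smul, hA, zero_smul, Finset.sum_const_zero]

/-- Villamayor's criterion for finitely many elements of the kernel. -/
lemma exists_endo_fixing_list (hflat : IsFlatLeftModule R M) {n : ℕ} (π : (Fin n → R) →ₗ[R] M)
    (hπ : Function.Surjective π) (l : List (Fin n → R)) (hl : ∀ k ∈ l, π k = 0) :
    ∃ θ : (Fin n → R) →ₗ[R] (Fin n → R), (∀ x, π (θ x) = 0) ∧ ∀ k ∈ l, θ k = k := by
  induction hm : l.length generalizing l with
  | zero =>
    obtain rfl := List.length_eq_zero_iff.mp hm
    exact ⟨0, by simp, by simp⟩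
  | succ m ih =>
    obtain ⟨a, t, rfl⟩ := List.exists_cons_of_length_eq_add_one hm
    obtain ⟨θ₁, h₁, h₁a⟩ := exists_endo_fixing hflat π hπ a (hl a (by simp))
    obtain ⟨θ₂, h₂, h₂t⟩ := ih (t.map fun k => k - θ₁ k)
      (by
        intro k hk
        obtain ⟨b, hb, rfl⟩ := List.mem_map.mp hk
        rw [map_sub, h₁, hl b (by simp [hb]), sub_zero])
      (by simpa using hm)
    -- The new `θ` satisfies `1 - θ = (1 - θ₂) ∘ (1 - θ₁)`.
    refine ⟨θ₁ + θ₂ ∘ₗ (LinearMap.id - θ₁), fun x => by simp [h₁, h₂], fun k hk => ?_⟩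
    have hθ : (θ₁ + θ₂ ∘ₗ (LinearMap.id - θ₁) : (Fin n → R) →ₗ[R] (Fin n → R)) k = θ₁ k + θ₂ (k - θ₁ k) := rfl
    rw [hθ]
    rcases List.mem_cons.mp hk with rfl | hk
    · rw [h₁a, sub_self, map_zero, add_zero]
    · rw [h₂t _ (List.mem_map.mpr ⟨k, hk, rfl⟩), add_sub_cancel]

/-- If `θ` projects `F` onto `ker π`, then `1 - θ` induces a section of `π`. -/
lemma projective_of_endo_fixing_ker {n : ℕ} (π : (Fin n → R) →ₗ[R] M)
    (hπ : Function.Surjective π) (θ : (Fin n → R) →ₗ[R] (Fin n → R))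
    (h : ∀ x, π (θ x) = 0) (hfix : ∀ k, π k = 0 → θ k = k) : Module.Projective R M := by
  have hker : LinearMap.ker π ≤ LinearMap.ker (LinearMap.id - θ) := fun k hk => by
    simp [hfix k hk]
  refine Module.Projective.of_split
    ((LinearMap.ker π).liftQ _ hker ∘ₗ (π.quotKerEquivOfSurjective hπ).symm.toLinearMap) π ?_
  ext m
  obtain ⟨x, rfl⟩ := hπ m
  have hx : (π.quotKerEquivOfSurjective hπ).symm (π x) = (LinearMap.ker π).mkQ x := by
    rw [LinearEquiv.symm_apply_eq]
    rfl
  simp only [LinearMap.comp_apply, LinearEquiv.coe_coe, hx, LinearMap.id_apply]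
  simp [h]

/-- A finitely generated flat module over a subring of a left Noetherian ring is projective. -/
lemma projective_of_injective_noetherian (hfg : Module.Finite R M)
    (hflat : IsFlatLeftModule R M) {Q : Type*} [Ring Q] [IsNoetherianRing Q] (f : R →+* Q)
    (hf : Function.Injective f) : Module.Projective R M := by
  classical
  obtain ⟨n, π, hπ⟩ := Module.Finite.exists_fin' R M
  let F : (Fin n → R) → (Fin n → Q) := fun x i => f (x i)
  have hF : Function.Injective F := fun x y h => funext fun i => hf (congrFun h i)
  let K : Set (Fin n → R) := {k | π k = 0}
  obtain ⟨T, hTK, hT⟩ := Submodule.fg_span_iff_fg_span_finset_subset (R := Q) (F '' K) |>.mp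
    (IsNoetherian.noetherian _)
  choose! g hgK hg using fun q (hq : q ∈ T) => hTK hq
  obtain ⟨θ, h, hfix⟩ := exists_endo_fixing_list hflat π hπ (T.toList.map g) (by
    intro k hk
    obtain ⟨q, hq, rfl⟩ := List.mem_map.mp hk
    exact hgK q (Finset.mem_toList.mp hq))
  -- `ψ` is the `Q`-linear extension of `θ` along `F`.
  let ψ : (Fin n → Q) →ₗ[Q] (Fin n → Q) :=
    Fintype.linearCombination Q (fun i => F (θ (Pi.single i 1)))
  have hψ : ∀ x, ψ (F x) = F (θ x) := fun x => by
    have hx : θ x = ∑ i, x i • θ (Pi.single i 1) := by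
      rw [LinearMap.pi_apply_eq_sum_univ θ x]
      refine Finset.sum_congr rfl fun i _ => ?_
      congr 2
      ext j
      simp [Pi.single_apply, eq_comm]
    rw [hx]
    ext j
    simp [ψ, F, Fintype.linearCombination_apply, Finset.sum_apply]
  have hspan : Submodule.span Q (F '' K) ≤ LinearMap.eqLocus ψ LinearMap.id := by
    rw [hT, Submodule.span_le]
    intro q hq
    have hθ := hfix (g q) (List.mem_map.mpr ⟨q, Finset.mem_toList.mpr hq, rfl⟩)
    change ψ q = q
    rw [← hg q hq, hψ, hθ]
  refine projective_of_endo_fixing_ker π hπ θ h fun k hk => hF ?_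
  rw [← hψ]
  exact hspan (Submodule.subset_span ⟨k, hk, rfl⟩)

end Villamayor

lemma injective_of_isLeftLocalization {R : Type*} [Ring R] {S : Set R} {Q : Type*} [Ring Q]
    {f : R →+* Q} (hf : IsLeftLocalization S f) (hS : ∀ s ∈ S, ∀ r, s * r = 0 → r = 0) :
    Function.Injective f := by
  rw [injective_iff_map_eq_zero]
  intro r hr
  obtain ⟨s, hs, hsr⟩ := (hf.2.2 r).mp hr
  exact hS s hs r hsr

/-- Corollary 2.13. If there is a finitely generated flat left
`R`-module `M` which is not projective, then `Q_l(R)` is not semisimple;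
equivalently, no left denominator set `S` consisting of regular elements has a
semisimple localization `S⁻¹R`. -/
theorem not_semisimple_of_fg_flat_not_projective {R : Type u} [Ring R]
    (M : Type u) [AddCommGroup M] [Module R M]
    (hfg : Module.Finite R M) (hflat : IsFlatLeftModule R M)
    (hnp : ¬ Module.Projective R M)
    (Q : Type u) [Ring Q] (f : R →+* Q) (hf : IsLeftLocalization (S0 R) f) :
    ¬ IsSemisimpleRing Q ∧
    ∀ (S : Set R), IsLeftDen S → S ⊆ regSet R →
      ∀ (Q' : Type u) [Ring Q'] (g : R →+* Q'),
        IsLeftLocalization S g → ¬ IsSemisimpleRing Q' := by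
  refine ⟨fun hQ => hnp ?_, fun S _ hreg Q' _ g hg hQ' => hnp ?_⟩
  · refine projective_of_injective_noetherian hfg hflat f
      (injective_of_isLeftLocalization hf ?_)
    rintro s ⟨S, ⟨-, hass⟩, hs⟩ r hr
    have hmem : r ∈ assSet S := ⟨s, hs, hr⟩
    rwa [hass] at hmem
  · exact projective_of_injective_noetherian hfg hflat g
      (injective_of_isLeftLocalization hg fun s hs => (hreg hs).1)

end BavulaLQR
end

section
/- Let R be a ring, S ∈ Den_l(R, a), b a two-sided ideal of R with b ⊆ a, and π: R → R/b the quotient map. Then π(S) is a left denominator set of R/b with ass(π(S)) = a/b, and the localizations S⁻¹R and π(S)⁻¹(R/b) are isomorphic as rings (via s⁻¹r ↦ π(s)⁻¹π(r)). -/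
/-!
Elements of `b ⊆ ass S` are annihilated on the left by elements of `S`, so any relation
`π s * π r = 0` or `π r * π s = 0` lifts to a relation in `R` after multiplying on the left by an
element of `S`. This gives the denominator conditions for `π '' S`, and shows that
`π r ∈ ass (π '' S)` exactly when `r ∈ ass S`.

For the isomorphism, the last fact says that `f₂ ∘ π` is itself a left localization of `R` at `S`.
Any left localization at a left denominator set is isomorphic under `R` to Mathlib's
`OreLocalization` (the universal map is bijective), so two of them are isomorphic under `R`.
-/

/-! Basic notions from the paper "The largest left quotient ring of a ring"
(V. V. Bavula): multiplicative sets, left Ore sets, left denominator sets,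
`ass S`, and an abstract characterization of the left Ore localization. -/

universe u

namespace BavulaLQR

/-- A multiplicative set as a submonoid. -/
def IsMulSet.submonoid {R : Type*} [Ring R] {S : Set R} (h : IsMulSet S) : Submonoid R where
  carrier := S
  one_mem' := h.1
  mul_mem' := fun ha hb => h.2.2 _ ha _ hb

theorem IsLeftDen.nonempty_oreSet {R : Type*} [Ring R] {S : Set R} (h : IsLeftDen S) :
    Nonempty (OreLocalization.OreSet h.1.1.submonoid) := by
  rw [OreLocalization.nonempty_oreSet_iff]
  constructor
  · intro r₁ r₂ s hs
    obtain ⟨t, ht, h0⟩ := h.2 (r₁ - r₂) s s.2 (by rw [sub_mul, hs, sub_self])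
    exact ⟨⟨t, ht⟩, by rwa [mul_sub, sub_eq_zero] at h0⟩
  · intro r s
    obtain ⟨r', s', hs', e⟩ := h.1.2 r s s.2
    exact ⟨r', ⟨s', hs'⟩, e⟩

/-- A left localization at a left denominator set is isomorphic, under `R`, to the Ore
localization of Mathlib. -/
theorem IsLeftLocalization.exists_equiv_oreLocalization {R : Type*} [Ring R] {S : Set R}
    (h : IsLeftDen S) [OreLocalization.OreSet h.1.1.submonoid] {Q : Type*} [Ring Q] {f : R →+* Q}
    (hf : IsLeftLocalization S f) :
    ∃ e : OreLocalization h.1.1.submonoid R ≃+* Q,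
      ∀ r, e (OreLocalization.numeratorHom r) = f r := by
  obtain ⟨hu, hs, hk⟩ := hf
  have hu' : ∀ s : h.1.1.submonoid, IsUnit ((f : R →* Q).comp h.1.1.submonoid.subtype s) :=
    fun s => hu s s.2
  let fS := IsUnit.liftRight _ hu'
  have hfS : ∀ s : h.1.1.submonoid, f s = fS s := fun _ => rfl
  let φ := OreLocalization.universalHom f fS hfS
  have hφ : Function.Bijective φ := by
    constructor
    · rw [injective_iff_map_eq_zero]
      intro x hx
      induction x using OreLocalization.ind with | _ r s
      rw [OreLocalization.universalHom_apply, Units.mul_right_eq_zero, hk] at hx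
      obtain ⟨t, ht, h0⟩ := hx
      rw [OreLocalization.expand' r s ⟨t, ht⟩, Submonoid.smul_def, smul_eq_mul, h0,
        OreLocalization.zero_oreDiv]
    · intro q
      obtain ⟨s, hs, r, e⟩ := hs q
      refine ⟨OreLocalization.oreDiv r ⟨s, hs⟩, ?_⟩
      rw [OreLocalization.universalHom_apply, Units.inv_mul_eq_iff_eq_mul, ← e]
      rfl
  exact ⟨RingEquiv.ofBijective φ hφ, fun r => OreLocalization.universalHom_commutes f fS hfS⟩

/-- Uniqueness of the left localization at a left denominator set. -/
theorem IsLeftLocalization.exists_equiv {R : Type*} [Ring R] {S : Set R} (h : IsLeftDen S)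
    {Q₁ Q₂ : Type*} [Ring Q₁] [Ring Q₂] {f₁ : R →+* Q₁} {f₂ : R →+* Q₂}
    (h₁ : IsLeftLocalization S f₁) (h₂ : IsLeftLocalization S f₂) :
    ∃ e : Q₁ ≃+* Q₂, (e : Q₁ →+* Q₂).comp f₁ = f₂ := by
  obtain ⟨_⟩ := h.nonempty_oreSet
  obtain ⟨e₁, he₁⟩ := h₁.exists_equiv_oreLocalization h
  obtain ⟨e₂, he₂⟩ := h₂.exists_equiv_oreLocalization h
  refine ⟨e₁.symm.trans e₂, RingHom.ext fun r => ?_⟩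
  simp [← he₁, ← he₂]

/-- Lemma 3.2.(1). Let `S ∈ Den_l(R, a)`, let `b` be a two-sided
ideal of `R` with `b ⊆ a`, and let `π : R → R/b` be the quotient map (formalized as
a surjective ring homomorphism with kernel `b`). Then `π(S)` is a left denominator
set of `R/b` with `ass(π(S)) = a/b = π '' a`, and `S⁻¹R ≅ π(S)⁻¹(R/b)` via
`s⁻¹r ↦ π(s)⁻¹π(r)`. -/
theorem denominator_set_mod_ideal {R : Type u} [Ring R] (a : Set R) (S : Set R)
    (hS : IsLeftDen S ∧ assSet S = a)
    (b : TwoSidedIdeal R) (hba : (b : Set R) ⊆ a)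
    (R' : Type u) [Ring R'] (π : R →+* R') (hsurj : Function.Surjective π)
    (hker : ∀ r : R, π r = 0 ↔ r ∈ b) :
    (IsLeftDen (π '' S) ∧ assSet (π '' S) = π '' a) ∧
    ∀ (Q₁ : Type u) [Ring Q₁] (f₁ : R →+* Q₁), IsLeftLocalization S f₁ →
      ∀ (Q₂ : Type u) [Ring Q₂] (f₂ : R' →+* Q₂), IsLeftLocalization (π '' S) f₂ →
        ∃ e : Q₁ ≃+* Q₂, (e : Q₁ →+* Q₂).comp f₁ = f₂.comp π := by
  obtain ⟨hden, rfl⟩ := hS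
  have hS := hden
  obtain ⟨⟨⟨h1, h0, hmul⟩, hore⟩, hcan⟩ := hS
  have hlift : ∀ r, π r = 0 → ∃ t ∈ S, t * r = 0 := fun r hr => hba ((hker r).1 hr)
  have hass : ∀ r, π r ∈ assSet (π '' S) ↔ r ∈ assSet S := by
    intro r
    constructor
    · rintro ⟨_, ⟨s, hs, rfl⟩, e⟩
      obtain ⟨t, ht, e'⟩ := hlift (s * r) (by rw [map_mul, e])
      exact ⟨t * s, hmul t ht s hs, by rw [mul_assoc, e']⟩
    · rintro ⟨s, hs, e⟩
      exact ⟨π s, ⟨s, hs, rfl⟩, by rw [← map_mul, e, map_zero]⟩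
  refine ⟨⟨⟨⟨⟨⟨1, h1, map_one π⟩, ?_, ?_⟩, ?_⟩, ?_⟩, ?_⟩, ?_⟩
  · rintro ⟨s, hs, e⟩
    obtain ⟨t, ht, e'⟩ := hlift s e
    exact h0 (e' ▸ hmul t ht s hs)
  · rintro _ ⟨s, hs, rfl⟩ _ ⟨t, ht, rfl⟩
    exact ⟨s * t, hmul s hs t ht, map_mul π s t⟩
  · rintro r _ ⟨s, hs, rfl⟩
    obtain ⟨r, rfl⟩ := hsurj r
    obtain ⟨r', s', hs', e⟩ := hore r s hs
    exact ⟨π r', π s', ⟨s', hs', rfl⟩, by rw [← map_mul, e, map_mul]⟩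
  · rintro r _ ⟨s, hs, rfl⟩ e
    obtain ⟨r, rfl⟩ := hsurj r
    obtain ⟨t, ht, e'⟩ := hlift (r * s) (by rw [map_mul, e])
    obtain ⟨u, hu, e''⟩ := hcan (t * r) s hs (by rw [mul_assoc, e'])
    exact (hass r).2 ⟨u * t, hmul u hu t ht, by rw [mul_assoc, e'']⟩
  · ext r
    constructor
    · intro hr
      obtain ⟨r, rfl⟩ := hsurj r
      exact ⟨r, (hass r).1 hr, rfl⟩
    · rintro ⟨r, hr, rfl⟩
      exact (hass r).2 hr
  · intro Q₁ _ f₁ hf₁ Q₂ _ f₂ ⟨hu, hfrac, hk⟩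
    refine IsLeftLocalization.exists_equiv hden hf₁ ⟨fun s hs => hu _ ⟨s, hs, rfl⟩, ?_, ?_⟩
    · intro q
      obtain ⟨_, ⟨s, hs, rfl⟩, r, e⟩ := hfrac q
      obtain ⟨r, rfl⟩ := hsurj r
      exact ⟨s, hs, r, e⟩
    · exact fun r => (hk (π r)).trans (hass r)

end BavulaLQR
end

section
/- Let R be a ring. For every left denominator set S of R there exists a maximal element (with respect to inclusion) of the poset of all left denominator sets of R containing S. In particular, the set maxDen_l(R) of maximal elements of the poset of all left denominator sets of R, ordered by inclusion, is nonempty. -/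
/-!
The conditions defining a left denominator set are finitary: each one concerns at most two elements
of the set and asks for a witness in the set. Hence the union of a nonempty chain of left
denominator sets is again one (`IsLeftDen.sUnion`), and Zorn's lemma gives a maximal left
denominator set above any given one. Applying this to `{1}`, which is a left denominator set of a
nontrivial ring, shows that maximal left denominator sets exist.
-/

/-! Basic notions from the paper "The largest left quotient ring of a ring"
(V. V. Bavula): multiplicative sets, left Ore sets, left denominator sets,
`ass S`, and an abstract characterization of the left Ore localization. -/

universe u

namespace BavulaLQR

theorem IsLeftDen.sUnion {R : Type*} [Ring R] {c : Set (Set R)} (hc : ∀ S ∈ c, IsLeftDen S)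
    (hchain : IsChain (· ⊆ ·) c) (hne : c.Nonempty) : IsLeftDen (⋃₀ c) := by
  refine ⟨⟨⟨?_, ?_, ?_⟩, ?_⟩, ?_⟩
  · obtain ⟨S, hS⟩ := hne
    exact ⟨S, hS, (hc S hS).1.1.1⟩
  · rintro ⟨S, hS, h0⟩
    exact (hc S hS).1.1.2.1 h0
  · rintro s ⟨S, hS, hs⟩ t ⟨T, hT, ht⟩
    obtain h | h := hchain.total hS hT
    · exact ⟨T, hT, (hc T hT).1.1.2.2 s (h hs) t ht⟩
    · exact ⟨S, hS, (hc S hS).1.1.2.2 s hs t (h ht)⟩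
  · rintro r s ⟨S, hS, hs⟩
    obtain ⟨r', s', hs', h⟩ := (hc S hS).1.2 r s hs
    exact ⟨r', s', ⟨S, hS, hs'⟩, h⟩
  · rintro r s ⟨S, hS, hs⟩ h
    obtain ⟨t, ht, h'⟩ := (hc S hS).2 r s hs h
    exact ⟨t, ⟨S, hS, ht⟩, h'⟩

theorem isLeftDen_singleton_one {R : Type*} [Ring R] [Nontrivial R] :
    IsLeftDen ({1} : Set R) := by
  simp [IsLeftDen, IsLeftOre, IsMulSet]

/-- Lemma 3.8. Every left denominator set of `R` is contained in a
maximal left denominator set; in particular (since `{1}` is a left denominator set of the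
nontrivial ring `R`), the set `maxDen_l(R)` of maximal left denominator sets is nonempty. -/
theorem exists_maximal_left_denominator_set {R : Type u} [Ring R] [Nontrivial R] :
    (∀ S : Set R, IsLeftDen S → ∃ M : Set R, IsLeftDen M ∧ S ⊆ M ∧
      ∀ T : Set R, IsLeftDen T → M ⊆ T → T = M) ∧
    ∃ M : Set R, IsLeftDen M ∧ ∀ T : Set R, IsLeftDen T → M ⊆ T → T = M := by
  have key : ∀ S : Set R, IsLeftDen S → ∃ M : Set R, IsLeftDen M ∧ S ⊆ M ∧
      ∀ T : Set R, IsLeftDen T → M ⊆ T → T = M := by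
    intro S hS
    obtain ⟨M, hSM, hM⟩ := zorn_subset_nonempty {T : Set R | IsLeftDen T}
      (fun c hc hchain hne =>
        ⟨⋃₀ c, IsLeftDen.sUnion hc hchain hne, fun _ => Set.subset_sUnion_of_mem⟩) S hS
    exact ⟨M, hM.prop, hSM, fun T hT hMT => (hM.eq_of_subset hT hMT).symm⟩
  obtain ⟨M, hM, -, hmax⟩ := key {1} isLeftDen_singleton_one
  exact ⟨key, M, hM, hmax⟩

end BavulaLQR
end

section
/- Let R be a ring, a ∈ Ass_l(R), Q := Q_a(R), and Q* the group of units of Q. If T ∈ Den_l(Q, b) for some b ∈ Ass_l(Q), then the multiplicative sub-semigroup Q*T of (Q,·) generated by Q* ∪ T is again a left denominator set of Q with ass(Q*T) = b. -/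
/-!
The argument works for a left denominator set `T` of an arbitrary ring `Q`. Put `b = ass T`. It is
closed under left and right multiplication by elements of `Q`, and the elements of `T` are regular
modulo `b`: if `t * q` or `q * t` lies in `b`, so does `q`. Units are regular modulo `b` as well,
and regularity modulo `b` passes to products, so it holds on the whole monoid `Q*T` generated by the
units and `T` (`regular_of_mem_closure`). Since `1 ∉ b`, this gives `0 ∉ Q*T`, and also
`ass (Q*T) = b` and left reversibility of `Q*T`. The left Ore condition likewise holds for units and
for elements of `T`, and passes to products (`ore_of_mem_closure`).
-/

/-! Basic notions from the paper "The largest left quotient ring of a ring"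
(V. V. Bavula): multiplicative sets, left Ore sets, left denominator sets,
`ass S`, and an abstract characterization of the left Ore localization. -/

universe u

namespace BavulaLQR

theorem assSet_mul_right {Q : Type*} [Ring Q] {T : Set Q} {x : Q} (hx : x ∈ assSet T) (q : Q) :
    x * q ∈ assSet T := by
  obtain ⟨t, ht, h⟩ := hx
  exact ⟨t, ht, by rw [← mul_assoc, h, zero_mul]⟩

/-- The left Ore condition makes `ass T` stable under left multiplication. -/
theorem assSet_mul_left {Q : Type*} [Ring Q] {T : Set Q} (hT : IsLeftOre T) {x : Q}
    (hx : x ∈ assSet T) (q : Q) : q * x ∈ assSet T := by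
  obtain ⟨t, ht, h⟩ := hx
  obtain ⟨q', t', ht', h'⟩ := hT.2 q t ht
  exact ⟨t', ht', by rw [← mul_assoc, h', mul_assoc, h, mul_zero]⟩

/-- Every element of the monoid generated by the units and `T` is left and right regular
modulo `ass T`. -/
theorem regular_of_mem_closure {Q : Type*} [Ring Q] {T : Set Q} (hT : IsLeftDen T) {m : Q}
    (hm : m ∈ Submonoid.closure ({q : Q | IsUnit q} ∪ T)) :
    (∀ r, m * r ∈ assSet T → r ∈ assSet T) ∧ (∀ r, r * m ∈ assSet T → r ∈ assSet T) := by
  induction hm using Submonoid.closure_induction with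
  | mem x hx =>
    rcases hx with ⟨u, rfl⟩ | hx
    · refine ⟨fun r hr => ?_, fun r hr => ?_⟩
      · simpa using assSet_mul_left hT.1 hr (↑u⁻¹ : Q)
      · simpa using assSet_mul_right hr (↑u⁻¹ : Q)
    · refine ⟨fun r hr => ?_, fun r hr => ?_⟩
      · obtain ⟨t, ht, h⟩ := hr
        exact ⟨t * x, hT.1.1.2.2 t ht x hx, by rw [mul_assoc, h]⟩
      · obtain ⟨t, ht, h⟩ := hr
        obtain ⟨t', ht', h'⟩ := hT.2 (t * r) x hx (by rw [mul_assoc, h])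
        exact ⟨t' * t, hT.1.1.2.2 t' ht' t ht, by rw [mul_assoc, h']⟩
  | one => simp
  | mul x y _ _ hx hy =>
    refine ⟨fun r hr => hy.1 r (hx.1 _ ?_), fun r hr => hx.2 r (hy.2 _ ?_)⟩
    · rwa [← mul_assoc]
    · rwa [mul_assoc]

theorem ore_of_mem_closure {Q : Type*} [Ring Q] {T : Set Q} (hT : IsLeftOre T) {m : Q}
    (hm : m ∈ Submonoid.closure ({q : Q | IsUnit q} ∪ T)) :
    ∀ r : Q, ∃ r' : Q, ∃ s ∈ Submonoid.closure ({q : Q | IsUnit q} ∪ T), s * r = r' * m := by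
  induction hm using Submonoid.closure_induction with
  | mem x hx =>
    intro r
    rcases hx with ⟨u, rfl⟩ | hx
    · exact ⟨r * (↑u⁻¹ : Q), 1, one_mem _, by simp⟩
    · obtain ⟨r', s, hs, h⟩ := hT.2 r x hx
      exact ⟨r', s, Submonoid.subset_closure (Or.inr hs), h⟩
  | one => exact fun r => ⟨r, 1, one_mem _, by simp⟩
  | mul x y _ _ hx hy =>
    intro r
    obtain ⟨r₁, s₁, hs₁, h₁⟩ := hy r
    obtain ⟨r₂, s₂, hs₂, h₂⟩ := hx r₁
    exact ⟨r₂, s₂ * s₁, mul_mem hs₂ hs₁, by rw [mul_assoc, h₁, ← mul_assoc, h₂, mul_assoc]⟩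

end BavulaLQR

namespace BavulaLQR

/-- Proposition 3.9.(1). Let `a ∈ Ass_l(R)`, let `f : R →+* Q` be
the localization of `R` at `S_a(R)` (so `Q = Q_a(R)`), and let `T` be a left
denominator set of `Q` (with `ass T = b ∈ Ass_l(Q)`). Then the multiplicative
sub-semigroup `Q*T` of `Q` generated by the units of `Q` together with `T` is again
a left denominator set of `Q` with the same `ass`. -/
theorem units_mul_denominator_set {R : Type u} [Ring R] (a : Set R)
    (ha : ∃ S : Set R, IsLeftDen S ∧ assSet S = a)
    (Q : Type u) [Ring Q] (f : R →+* Q) (hf : IsLeftLocalization (largestLeftDen a) f)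
    (T : Set Q) (hT : IsLeftDen T) :
    IsLeftDen (↑(Submonoid.closure ({q : Q | IsUnit q} ∪ T)) : Set Q) ∧
    assSet (↑(Submonoid.closure ({q : Q | IsUnit q} ∪ T)) : Set Q) = assSet T := by
  have hsub : ∀ t ∈ T, t ∈ Submonoid.closure ({q : Q | IsUnit q} ∪ T) :=
    fun t ht => Submonoid.subset_closure (Or.inr ht)
  have hzero : (0 : Q) ∈ assSet T := ⟨1, hT.1.1.1, mul_zero 1⟩
  have hone : (1 : Q) ∉ assSet T := by
    rintro ⟨t, ht, h⟩
    rw [mul_one] at h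
    exact hT.1.1.2.1 (h ▸ ht)
  refine ⟨⟨⟨⟨one_mem _, fun h0 => ?_, fun s hs t ht => mul_mem hs ht⟩,
    fun r s hs => ore_of_mem_closure hT.1 hs r⟩, fun r s hs h => ?_⟩, Set.ext fun r => ⟨?_, ?_⟩⟩
  · exact hone ((regular_of_mem_closure hT h0).1 1 (by rwa [zero_mul]))
  · obtain ⟨t, ht, h'⟩ := (regular_of_mem_closure hT hs).2 r (by rwa [h])
    exact ⟨t, hsub t ht, h'⟩
  · rintro ⟨s, hs, h⟩
    exact (regular_of_mem_closure hT hs).1 r (by rwa [h])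
  · rintro ⟨t, ht, h⟩
    exact ⟨t, hsub t ht, h⟩

end BavulaLQR
end

section
/- Let R be a ring, S ∈ maxDen_l(R), A := S⁻¹R, A* the group of units of A, a := ass(S), π: R → R/a the quotient map, and σ: R → A, r ↦ r/1. Then: (1) S = S_a(R), S = π⁻¹(S₀(R/a)), π(S) = S₀(R/a), and A ≅ Q_l(R/a); (2) S₀(A) = A* and S₀(A) ∩ (R/a) = S₀(R/a); (3) S = σ⁻¹(A*); (4) A* is generated as a group by π(S) and {π(s)⁻¹ : s ∈ S}; (5) A* = {π(s)⁻¹π(t) : s, t ∈ S}; (6) Q_l(A) = A and Ass_l(A) = {0}; in particular every T ∈ Den_l(A, 0) satisfies T ⊆ A*. -/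
/-! The maximality of `S` is always used by producing a left denominator set that contains `S`
and hence equals it. Three constructions supply such sets.

* Two left denominator sets with the same `ass` generate a left denominator set with that `ass`
  (`IsLeftDen.sup`): the Ore condition passes to products, and elements of either set are
  regular modulo the common ideal. So `S` contains every left denominator set with ideal
  `ass S`. Applied in `R/a` and pulled back along `π` (`IsLeftDen.preimage`), the same fact gives
  `S = π⁻¹(S₀(R/a))`.
* If every element of a nonzero ring `B` is a left fraction over `f : R →+* B` with denominators
  in `f⁻¹(B*)`, and elements of `ker f` are killed by elements of `f⁻¹(B*)`, then `f⁻¹(B*)` is a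
  left denominator set (`isLeftDen_unitPreimage`). With `f = σ` this gives `S = σ⁻¹(A*)`.
* For a left denominator set `T` of `A`, the composite `R → A → T⁻¹A` also has these
  properties, and the preimage of the units contains `S`, so it equals `S`. If `t ∈ T` and
  `σ s * t = σ r`, then `r` becomes a unit in `T⁻¹A`, so `r ∈ S` and `t` is already a unit of `A`
  (`isUnit_of_mem_isLeftDen`).

Thus every left denominator set of `A` consists of units, and the remaining claims follow. -/

/-! Basic notions from the paper "The largest left quotient ring of a ring"
(V. V. Bavula): multiplicative sets, left Ore sets, left denominator sets,
`ass S`, and an abstract characterization of the left Ore localization. -/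

universe u

namespace BavulaLQR

/-! ### Regularity modulo `ass S` -/

section OneSet

variable [Ring R] {S : Set R}

theorem IsLeftDen.mem_of_mul_mem_left (h : IsLeftDen S) {x r : R} (hx : x ∈ S)
    (hr : x * r ∈ assSet S) : r ∈ assSet S := by
  obtain ⟨s, hs, e⟩ := hr
  exact ⟨s * x, h.1.1.2.2 s hs x hx, by rw [mul_assoc, e]⟩

theorem IsLeftDen.mem_of_mul_mem_right (h : IsLeftDen S) {x r : R} (hx : x ∈ S)
    (hr : r * x ∈ assSet S) : r ∈ assSet S := by
  obtain ⟨s, hs, e⟩ := hr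
  obtain ⟨t, ht, e'⟩ := h.2 (s * r) x hx (by rw [mul_assoc, e])
  exact ⟨t * s, h.1.1.2.2 t ht s hs, by rw [mul_assoc, e']⟩

theorem IsLeftDen.one_notMem_assSet (h : IsLeftDen S) : (1 : R) ∉ assSet S := by
  rintro ⟨s, hs, e⟩
  rw [mul_one] at e
  exact h.1.1.2.1 (e ▸ hs)

theorem IsLeftDen.notMem_assSet (h : IsLeftDen S) {x : R} (hx : x ∈ S) : x ∉ assSet S :=
  fun hx' => h.one_notMem_assSet (h.mem_of_mul_mem_left hx (by rwa [mul_one]))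

theorem IsLeftDen.zero_mem_assSet (h : IsLeftDen S) : (0 : R) ∈ assSet S :=
  ⟨1, h.1.1.1, mul_zero 1⟩

theorem IsLeftLocalization.nontrivial (h : IsLeftDen S) {Q : Type*} [Ring Q] {f : R →+* Q}
    (hf : IsLeftLocalization S f) : Nontrivial Q := by
  refine ⟨⟨1, 0, fun e => h.one_notMem_assSet ((hf.2.2 1).1 ?_)⟩⟩
  rw [map_one, e]

end OneSet

/-! ### Joins of left denominator sets -/

/-- The submonoid generated by two left denominator sets with the same `ass` is a left
denominator set with that `ass`. -/
theorem IsLeftDen.sup [Ring R] {S T : Set R} (hS : IsLeftDen S) (hT : IsLeftDen T)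
    (hST : assSet T = assSet S) :
    ∃ M : Set R, IsLeftDen M ∧ assSet M = assSet S ∧ S ⊆ M ∧ T ⊆ M := by
  let M : Submonoid R := Submonoid.closure (S ∪ T)
  have hSM : ∀ s ∈ S, s ∈ M := fun s hs => Submonoid.subset_closure (Or.inl hs)
  have hTM : ∀ s ∈ T, s ∈ M := fun s hs => Submonoid.subset_closure (Or.inr hs)
  -- Every element of `M` is left and right regular modulo `ass S`.
  have hreg : ∀ m ∈ M, (∀ r, m * r ∈ assSet S → r ∈ assSet S) ∧
      (∀ r, r * m ∈ assSet S → r ∈ assSet S) := by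
    intro m hm
    refine Submonoid.closure_induction ?_ ?_ ?_ hm
    · rintro x (hx | hx)
      · exact ⟨fun r => hS.mem_of_mul_mem_left hx, fun r => hS.mem_of_mul_mem_right hx⟩
      · rw [← hST]
        exact ⟨fun r => hT.mem_of_mul_mem_left hx, fun r => hT.mem_of_mul_mem_right hx⟩
    · exact ⟨fun r h => by rwa [one_mul] at h, fun r h => by rwa [mul_one] at h⟩
    · intro x y _ _ hx hy
      exact ⟨fun r h => hy.1 _ (hx.1 _ (by rwa [← mul_assoc])),
        fun r h => hx.2 _ (hy.2 _ (by rwa [mul_assoc]))⟩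
  have hore : ∀ m ∈ M, ∀ r : R, ∃ r' : R, ∃ m' ∈ M, m' * r = r' * m := by
    intro m hm
    refine Submonoid.closure_induction ?_ ?_ ?_ hm
    · rintro x (hx | hx) r
      · obtain ⟨r', s', hs', e⟩ := hS.1.2 r x hx
        exact ⟨r', s', hSM _ hs', e⟩
      · obtain ⟨r', s', hs', e⟩ := hT.1.2 r x hx
        exact ⟨r', s', hTM _ hs', e⟩
    · exact fun r => ⟨r, 1, M.one_mem, by simp⟩
    · intro x y _ _ hx hy r
      obtain ⟨r₁, m₁, hm₁, e₁⟩ := hy r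
      obtain ⟨r₂, m₂, hm₂, e₂⟩ := hx r₁
      exact ⟨r₂, m₂ * m₁, M.mul_mem hm₂ hm₁, by
        rw [mul_assoc, e₁, ← mul_assoc, e₂, mul_assoc]⟩
  refine ⟨M, ⟨⟨⟨M.one_mem, fun h0 => ?_, fun s hs t ht => M.mul_mem hs ht⟩,
    fun r s hs => hore s hs r⟩, fun r m hm e => ?_⟩, ?_, hSM, hTM⟩
  · exact hS.one_notMem_assSet ((hreg 0 h0).1 1 (by simpa using hS.zero_mem_assSet))
  · obtain ⟨s, hs, e'⟩ := (hreg m hm).2 r (by rw [e]; exact hS.zero_mem_assSet)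
    exact ⟨s, hSM s hs, e'⟩
  · ext r
    constructor
    · rintro ⟨m, hm, e⟩
      exact (hreg m hm).1 r (by rw [e]; exact hS.zero_mem_assSet)
    · rintro ⟨s, hs, e⟩
      exact ⟨s, hSM s hs, e⟩

/-! ### Passing to and from the quotient by `ass S` -/

section Quotient

variable [Ring R] {S : Set R} {R' : Type*} [Ring R'] {π : R →+* R'}

theorem IsLeftDen.image (hS : IsLeftDen S) (hπ : Function.Surjective π)
    (hker : ∀ r : R, π r = 0 ↔ r ∈ assSet S) :
    IsLeftDen (π '' S) ∧ assSet (π '' S) = ({0} : Set R') := by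
  refine ⟨⟨⟨⟨⟨1, hS.1.1.1, map_one π⟩, ?_, ?_⟩, ?_⟩, ?_⟩, ?_⟩
  · rintro ⟨s, hs, e⟩
    exact hS.notMem_assSet hs ((hker s).1 e)
  · rintro _ ⟨s, hs, rfl⟩ _ ⟨t, ht, rfl⟩
    exact ⟨s * t, hS.1.1.2.2 s hs t ht, map_mul π s t⟩
  · rintro x _ ⟨s, hs, rfl⟩
    obtain ⟨r, rfl⟩ := hπ x
    obtain ⟨r', s', hs', e⟩ := hS.1.2 r s hs
    exact ⟨π r', π s', ⟨s', hs', rfl⟩, by rw [← map_mul, e, map_mul]⟩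
  · rintro x _ ⟨s, hs, rfl⟩ e
    obtain ⟨r, rfl⟩ := hπ x
    rw [← map_mul, hker] at e
    exact ⟨1, ⟨1, hS.1.1.1, map_one π⟩, by
      rw [one_mul, hker]; exact hS.mem_of_mul_mem_right hs e⟩
  · ext x
    constructor
    · rintro ⟨_, ⟨s, hs, rfl⟩, e⟩
      obtain ⟨r, rfl⟩ := hπ x
      rw [← map_mul, hker] at e
      exact (hker r).2 (hS.mem_of_mul_mem_left hs e)
    · rintro rfl
      exact ⟨1, ⟨1, hS.1.1.1, map_one π⟩, mul_zero 1⟩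

/-- The preimage of a left denominator set `T` of `R/ass S` with `ass T = 0` containing the image
of `S` is a left denominator set. The elements of `S` in the preimage lift identities from the quotient
to `R`. -/
theorem IsLeftDen.preimage (hπ : Function.Surjective π)
    (hker : ∀ r : R, π r = 0 ↔ r ∈ assSet S) {T : Set R'} (hT : IsLeftDen T)
    (hT0 : assSet T = ({0} : Set R')) (hST : S ⊆ π ⁻¹' T) : IsLeftDen (π ⁻¹' T) := by
  refine ⟨⟨⟨?_, ?_, ?_⟩, ?_⟩, ?_⟩
  · simpa using hT.1.1.1
  · simpa using hT.1.1.2.1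
  · intro s hs t ht
    simpa using hT.1.1.2.2 _ hs _ ht
  · intro r s hs
    obtain ⟨x, y, hy, e⟩ := hT.1.2 (π r) (π s) hs
    obtain ⟨r', rfl⟩ := hπ x
    obtain ⟨s', rfl⟩ := hπ y
    obtain ⟨v, hv, e'⟩ := (hker (s' * r - r' * s)).1 (by rw [map_sub, map_mul, map_mul, e, sub_self])
    refine ⟨v * r', v * s', ?_, ?_⟩
    · simpa using hT.1.1.2.2 _ (hST hv) _ hy
    · rw [mul_sub, sub_eq_zero] at e'
      rw [mul_assoc, e', mul_assoc]
  · intro r s hs e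
    have h0 : π r ∈ assSet T := hT.mem_of_mul_mem_right hs (by
      rw [← map_mul, e, map_zero]; exact hT.zero_mem_assSet)
    rw [hT0] at h0
    obtain ⟨v, hv, e'⟩ := (hker r).1 h0
    exact ⟨v, hST hv, e'⟩

end Quotient

/-! ### Preimages of unit groups -/

/-- The elements of `R` that become units in a nonzero ring `B` form a left denominator set, if
they provide denominators for all elements of `B` and annihilators for all elements of the
kernel. -/
theorem isLeftDen_unitPreimage [Ring R] {B : Type*} [Ring B] [Nontrivial B] (f : R →+* B)
    (hfrac : ∀ q : B, ∃ u : R, IsUnit (f u) ∧ ∃ r : R, f u * q = f r)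
    (hker : ∀ r : R, f r = 0 → ∃ u : R, IsUnit (f u) ∧ u * r = 0) :
    IsLeftDen {u : R | IsUnit (f u)} := by
  refine ⟨⟨⟨by simp, by simp, fun s hs t ht => ?_⟩, fun r s hs => ?_⟩, fun r s hs e => ?_⟩
  · simpa using IsUnit.mul hs ht
  · obtain ⟨w, hw⟩ : IsUnit (f s) := hs
    obtain ⟨u, hu, r', e⟩ := hfrac (f r * (w⁻¹ : Bˣ))
    have e1 : f u * f r = f r' * f s := by
      rw [← e, ← hw, mul_assoc, mul_assoc, Units.inv_mul, mul_one]
    obtain ⟨v, hv, e2⟩ := hker (u * r - r' * s) (by rw [map_sub, map_mul, map_mul, e1, sub_self])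
    refine ⟨v * r', v * u, ?_, ?_⟩
    · simpa using hv.mul hu
    · rw [mul_sub, sub_eq_zero] at e2
      rw [mul_assoc, e2, mul_assoc]
  · obtain ⟨v, hv, e2⟩ := hker r (by
      have h0 := congrArg f e
      rw [map_mul, map_zero] at h0
      exact (IsUnit.mul_left_eq_zero hs).1 h0)
    exact ⟨v, hv, e2⟩

/-! ### Left denominator sets of the localization -/

/-- The left localization at a left denominator set exists; it is Mathlib's Ore localization. -/
theorem IsLeftDen.exists_isLeftLocalization {A : Type u} [Ring A] {T : Set A} (hT : IsLeftDen T) :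
    ∃ (B : Type u) (_ : Ring B) (f : A →+* B), IsLeftLocalization T f := by
  let M : Submonoid A :=
    { carrier := T, one_mem' := hT.1.1.1, mul_mem' := fun ha hb => hT.1.1.2.2 _ ha _ hb }
  obtain ⟨inst⟩ : Nonempty (OreLocalization.OreSet M) := by
    rw [OreLocalization.nonempty_oreSet_iff]
    constructor
    · rintro r₁ r₂ ⟨s, hs⟩ e
      obtain ⟨t, ht, e'⟩ := hT.2 (r₁ - r₂) s hs (by rw [sub_mul, sub_eq_zero]; exact e)
      exact ⟨⟨t, ht⟩, by rwa [mul_sub, sub_eq_zero] at e'⟩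
    · rintro r ⟨s, hs⟩
      obtain ⟨r', s', hs', e⟩ := hT.1.2 r s hs
      exact ⟨r', ⟨s', hs'⟩, e⟩
  refine ⟨OreLocalization M A, inferInstance, OreLocalization.numeratorRingHom, ?_, ?_, ?_⟩
  · intro s hs
    exact OreLocalization.numerator_isUnit (⟨s, hs⟩ : M)
  · intro q
    induction q using OreLocalization.ind with | _ r s
    refine ⟨s, s.2, r, ?_⟩
    change OreLocalization.oreDiv (s : A) 1 * OreLocalization.oreDiv r s = OreLocalization.oreDiv r 1
    exact OreLocalization.mul_cancel
  · intro r
    rw [← map_zero (OreLocalization.numeratorRingHom (R := A) (S := M))]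
    change OreLocalization.oreDiv r 1 = OreLocalization.oreDiv 0 1 ↔ _
    rw [OreLocalization.oreDiv_eq_iff]
    constructor
    · rintro ⟨u, v, h1, h2⟩
      simp only [Submonoid.smul_def, smul_eq_mul, mul_zero, OneMemClass.coe_one, mul_one] at h1 h2
      exact ⟨u, u.2, by rw [h2, ← h1]⟩
    · rintro ⟨s, hs, e⟩
      exact ⟨⟨s, hs⟩, s, by simp [e], by simp⟩

/-- Every left denominator set of the localization of `R` at a maximal left denominator set
consists of units. -/
theorem isUnit_of_mem_isLeftDen {R : Type*} [Ring R] {S : Set R}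
    (hSden : IsLeftDen S) (hSmax : ∀ T : Set R, IsLeftDen T → S ⊆ T → T = S)
    {A : Type u} [Ring A] {σ : R →+* A} (hloc : IsLeftLocalization S σ)
    {T : Set A} (hT : IsLeftDen T) {t : A} (ht : t ∈ T) : IsUnit t := by
  obtain ⟨B, instB, g, hg⟩ := hT.exists_isLeftLocalization
  have := hg.nontrivial hT
  have hSu : ∀ s ∈ S, IsUnit (g.comp σ s) := fun s hs => (hloc.1 s hs).map g
  -- A numerator of an element of `T` becomes a unit in `T⁻¹A`.
  have hnum : ∀ t ∈ T, ∀ s ∈ S, ∀ r : R, σ s * t = σ r → IsUnit (g.comp σ r) := by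
    intro t ht s hs r e
    have h1 : g.comp σ r = g.comp σ s * g t := by simp [← e]
    rw [h1]
    exact (hSu s hs).mul (hg.1 t ht)
  have hU : IsLeftDen {u : R | IsUnit (g.comp σ u)} := by
    apply isLeftDen_unitPreimage
    · -- Suppressing `σ` and `g`: if `t q = a`, `s a = r` and `s' (s t) = r'`, then
      -- `r' q = s' r`.
      intro q
      obtain ⟨t, ht, a, e⟩ := hg.2.1 q
      obtain ⟨s, hs, r, e1⟩ := hloc.2.1 a
      obtain ⟨s', hs', r', e2⟩ := hloc.2.1 (σ s * t)
      refine ⟨r', hnum t ht (s' * s) (hSden.1.1.2.2 s' hs' s hs) r' ?_, s' * r, ?_⟩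
      · rw [map_mul, mul_assoc, e2]
      · rw [RingHom.comp_apply, RingHom.comp_apply, ← e2, map_mul σ, ← e1]
        simp only [map_mul, mul_assoc, e]
    · intro r hr
      obtain ⟨t, ht, e⟩ := (hg.2.2 (σ r)).1 hr
      obtain ⟨s, hs, r', e1⟩ := hloc.2.1 t
      obtain ⟨s', hs', e2⟩ := (hloc.2.2 (r' * r)).1 (by rw [map_mul, ← e1, mul_assoc, e, mul_zero])
      refine ⟨s' * r', ?_, by rw [mul_assoc, e2]⟩
      rw [map_mul]
      exact (hSu s' hs').mul (hnum t ht s hs r' e1)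
  have hUS := hSmax _ hU hSu
  obtain ⟨s, hs, r, e⟩ := hloc.2.1 t
  have hr : r ∈ S := hUS ▸ hnum t ht s hs r e
  obtain ⟨w, hw⟩ := hloc.1 s hs
  rw [← hw] at e
  rw [← Units.isUnit_units_mul w, e]
  exact hloc.1 r hr

theorem isLeftDen_units (A : Type*) [Ring A] [Nontrivial A] :
    IsLeftDen {u : A | IsUnit u} :=
  isLeftDen_unitPreimage (RingHom.id A) (fun q => ⟨1, by simp, q, by simp⟩)
    (fun r hr => ⟨1, by simp, by simpa using hr⟩)

theorem assSet_eq_zero_of_isUnit {A : Type*} [Ring A] {T : Set A} (hT : IsLeftDen T)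
    (h : ∀ t ∈ T, IsUnit t) : assSet T = ({0} : Set A) := by
  ext r
  constructor
  · rintro ⟨t, ht, e⟩
    exact (h t ht).mul_right_eq_zero.1 e
  · rintro rfl
    exact hT.zero_mem_assSet

/-! ### The localization at a maximal left denominator set -/

/-- Theorem 3.12. Let `S` be a maximal left denominator set of `R`,
`σ : R →+* A` the localization of `R` at `S` (so `A = S⁻¹R`), `a := ass S`,
`π : R → R/a` the quotient map, and `j : R/a →+* A` the induced map (`j ∘ π = σ`). Then:
(1) `S = S_a(R) = π⁻¹(S₀(R/a))`, `π(S) = S₀(R/a)` and `A = Q_l(R/a)` (via `j`);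
(2) `S₀(A) = A*` and `S₀(A) ∩ (R/a) = S₀(R/a)`;
(3) `S = σ⁻¹(A*)`;
(4) `A*` is generated as a group by `π(S)` and `π(S)⁻¹`;
(5) `A* = {π(s)⁻¹π(t) : s, t ∈ S}`;
(6) `Q_l(A) = A` and `Ass_l(A) = {0}`; in particular every `T ∈ Den_l(A, 0)`
satisfies `T ⊆ A*`. -/
theorem maximal_left_quotient_ring_properties {R : Type u} [Ring R] (S : Set R)
    (hSden : IsLeftDen S) (hSmax : ∀ T : Set R, IsLeftDen T → S ⊆ T → T = S)
    (A : Type u) [Ring A] (σ : R →+* A) (hloc : IsLeftLocalization S σ)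
    (R' : Type u) [Ring R'] (π : R →+* R') (hπ : Function.Surjective π)
    (hker : ∀ r : R, π r = 0 ↔ r ∈ assSet S)
    (j : R' →+* A) (hj : j.comp π = σ) :
    (S = largestLeftDen (assSet S) ∧ S = π ⁻¹' (S0 R') ∧ π '' S = S0 R' ∧
      IsLeftLocalization (S0 R') j) ∧
    (S0 A = {u : A | IsUnit u} ∧ j ⁻¹' (S0 A) = S0 R') ∧
    (S = σ ⁻¹' {u : A | IsUnit u}) ∧
    (Subgroup.closure {u : Aˣ | ∃ s ∈ S, (u : A) = σ s} = ⊤) ∧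
    ({u : A | IsUnit u} = {q : A | ∃ s ∈ S, ∃ t ∈ S, σ s * q = σ t}) ∧
    (IsLeftLocalization (S0 A) (RingHom.id A) ∧
      {b : Set A | ∃ T : Set A, IsLeftDen T ∧ assSet T = b} = {({0} : Set A)} ∧
      ∀ T : Set A, IsLeftDen T → assSet T = ({0} : Set A) → T ⊆ {u : A | IsUnit u}) := by
  have hinj : ∀ x : R', j x = 0 ↔ x = 0 := by
    intro x
    obtain ⟨r, rfl⟩ := hπ x
    rw [hker, ← hloc.2.2, ← hj, RingHom.comp_apply]
  have := hloc.nontrivial hSden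
  have hjπ : ∀ r, j (π r) = σ r := fun r => by rw [← hj, RingHom.comp_apply]
  have h1a : S = largestLeftDen (assSet S) := by
    apply Set.Subset.antisymm
    · exact fun s hs => ⟨S, ⟨hSden, rfl⟩, hs⟩
    · rintro x ⟨T, ⟨hT, hTa⟩, hx⟩
      obtain ⟨M, hM, -, hSM, hTM⟩ := hSden.sup hT hTa
      exact hSmax M hM hSM ▸ hTM hx
  have himg := hSden.image hπ hker
  have h1b : S = π ⁻¹' (S0 R') := by
    apply Set.Subset.antisymm
    · exact fun s hs => ⟨π '' S, himg, s, hs, rfl⟩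
    · rintro x ⟨T, ⟨hT, hTa⟩, hx⟩
      obtain ⟨M, hM, hM0, hSM, hTM⟩ := himg.1.sup hT (hTa.trans himg.2.symm)
      have hSM' : S ⊆ π ⁻¹' M := fun s hs => hSM ⟨s, hs, rfl⟩
      have hE := hSmax _ (IsLeftDen.preimage hπ hker hM (hM0.trans himg.2) hSM') hSM'
      exact hE ▸ hTM hx
  have h1c : π '' S = S0 R' := by
    conv_lhs => rw [h1b]
    exact Set.image_preimage_eq _ hπ
  have h1d : IsLeftLocalization (S0 R') j := by
    rw [← h1c]
    refine ⟨?_, ?_, ?_⟩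
    · rintro _ ⟨s, hs, rfl⟩
      rw [hjπ]
      exact hloc.1 s hs
    · intro q
      obtain ⟨s, hs, r, e⟩ := hloc.2.1 q
      exact ⟨π s, ⟨s, hs, rfl⟩, π r, by rw [hjπ, hjπ, e]⟩
    · intro x
      rw [himg.2, hinj, Set.mem_singleton_iff]
  have hTU : ∀ T : Set A, IsLeftDen T → ∀ t ∈ T, IsUnit t :=
    fun T hT t ht => isUnit_of_mem_isLeftDen hSden hSmax hloc hT ht
  have hUden := isLeftDen_units A
  have hU0 := assSet_eq_zero_of_isUnit hUden (fun t ht => ht)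
  have h2a : S0 A = {u : A | IsUnit u} := by
    apply Set.Subset.antisymm
    · rintro x ⟨T, ⟨hT, -⟩, hx⟩
      exact hTU T hT x hx
    · exact fun x hx => ⟨_, ⟨hUden, hU0⟩, hx⟩
  have h3 : S = σ ⁻¹' {u : A | IsUnit u} := by
    refine (hSmax _ (isLeftDen_unitPreimage σ ?_ ?_) hloc.1).symm
    · intro q
      obtain ⟨s, hs, r, e⟩ := hloc.2.1 q
      exact ⟨s, hloc.1 s hs, r, e⟩
    · intro r hr
      obtain ⟨s, hs, e⟩ := (hloc.2.2 r).1 hr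
      exact ⟨s, hloc.1 s hs, e⟩
  have hmem : ∀ r, r ∈ S ↔ IsUnit (σ r) := fun r => by
    conv_lhs => rw [h3]
    rfl
  have h5 : {u : A | IsUnit u} = {q : A | ∃ s ∈ S, ∃ t ∈ S, σ s * q = σ t} := by
    ext q
    constructor
    · intro hq
      obtain ⟨s, hs, r, e⟩ := hloc.2.1 q
      exact ⟨s, hs, r, (hmem r).2 (e ▸ (hloc.1 s hs).mul hq), e⟩
    · rintro ⟨s, hs, t, ht, e⟩
      obtain ⟨w, hw⟩ := hloc.1 s hs
      rw [← hw] at e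
      change IsUnit q
      rw [← Units.isUnit_units_mul w, e]
      exact hloc.1 t ht
  refine ⟨⟨h1a, h1b, h1c, h1d⟩, ⟨h2a, ?_⟩, h3, ?_, h5, ⟨⟨?_, ?_, ?_⟩, ?_, fun T hT _ => hTU T hT⟩⟩
  · ext x
    obtain ⟨r, rfl⟩ := hπ x
    have h : r ∈ S ↔ π r ∈ S0 R' := by
      conv_lhs => rw [h1b]
      rfl
    rw [← h, hmem, h2a, Set.mem_preimage, hjπ]
    rfl
  · rw [eq_top_iff]
    rintro u -
    have hu : (u : A) ∈ {u : A | IsUnit u} := u.isUnit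
    rw [h5] at hu
    obtain ⟨s, hs, t, ht, e⟩ := hu
    obtain ⟨w, hw⟩ := hloc.1 s hs
    obtain ⟨v, hv⟩ := hloc.1 t ht
    have huv : u = w⁻¹ * v := by
      rw [eq_inv_mul_iff_mul_eq]
      ext
      rw [Units.val_mul, hw, hv, e]
    rw [huv]
    exact Subgroup.mul_mem _ (Subgroup.inv_mem _ (Subgroup.subset_closure ⟨s, hs, hw⟩))
      (Subgroup.subset_closure ⟨t, ht, hv⟩)
  · rw [h2a]
    intro s hs
    exact hs
  · rw [h2a]
    exact fun q => ⟨1, isUnit_one, q, by simp⟩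
  · rw [h2a, hU0]
    exact fun r => by simp
  · ext b
    constructor
    · rintro ⟨T, hT, rfl⟩
      exact assSet_eq_zero_of_isUnit hT (hTU T hT)
    · rintro rfl
      exact ⟨_, hUden, hU0⟩


end BavulaLQR
end

section
/- Let R be a ring, a ∈ Ass_l(R), and A = S⁻¹R for some S ∈ Den_l(R, a). Then the natural ring homomorphism A → Q_a(R) (induced by the inclusion S ⊆ S_a(R)) is an isomorphism if and only if Q_l(A) = A, i.e. every element of S₀(A) is a unit of A. -/
/-!
Write `T` for the union `largestLeftDen a` of all left denominator sets with `ass = a`.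

* If `φ` is bijective, let `x` lie in a left denominator set `S'` of `A` with `ass S' = 0`, and let
  `M` be the submonoid of `A` generated by `S'` and the units of `A`. It consists of regular
  elements and is left Ore (`closure_ore`), and its preimage under `f` is a left denominator set
  of `R` with `ass = a` (`isLeftDen_preimage`). Hence this preimage is contained in `T`, so `g`
  inverts it. Writing `f s * x = f r`, the element `r` lies in the preimage, so `φ (f r)`, and
  with it `f r` and `x`, is a unit.
* The map `φ` is always injective, because `ker g = ass T = a = ass S = ker f`. By injectivity the
  set of elements of `A` that become units in `QA` is a left denominator set with `ass = 0`
  (`isLeftDen_isUnit_map`), and it contains `f T`. If all of `S0 A` consists of units, then `f`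
  inverts `T`, and the fractions `(g t)⁻¹ * g r` are in the range of `φ`.
-/

/-! Basic notions from the paper "The largest left quotient ring of a ring"
(V. V. Bavula): multiplicative sets, left Ore sets, left denominator sets,
`ass S`, and an abstract characterization of the left Ore localization. -/

universe u

namespace BavulaLQR

/-- The submonoid generated by a left Ore set and the units satisfies the left Ore condition:
the elements `w` that can be moved past every `r` are closed under products. -/
theorem closure_ore {A : Type*} [Ring A] {S : Set A} (hS : IsLeftOre S) {w : A}
    (hw : w ∈ Submonoid.closure (S ∪ {u : A | IsUnit u})) (r : A) :
    ∃ r' : A, ∃ w' ∈ Submonoid.closure (S ∪ {u : A | IsUnit u}), w' * r = r' * w := by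
  induction hw using Submonoid.closure_induction generalizing r with
  | mem x hx =>
    rcases hx with hx | hx
    · obtain ⟨r', s', hs', h⟩ := hS.2 r x hx
      exact ⟨r', s', Submonoid.subset_closure (Or.inl hs'), h⟩
    · obtain ⟨u, rfl⟩ := hx
      exact ⟨r * ↑u⁻¹, 1, one_mem _, by simp⟩
  | one => exact ⟨r, 1, one_mem _, by simp⟩
  | mul x y _ _ ihx ihy =>
    obtain ⟨r₁, w₁, hw₁, h₁⟩ := ihy r
    obtain ⟨r₂, w₂, hw₂, h₂⟩ := ihx r₁
    exact ⟨r₂, w₂ * w₁, mul_mem hw₂ hw₁, by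
      rw [mul_assoc, h₁, ← mul_assoc, h₂, mul_assoc]⟩

theorem closure_regular {A : Type*} [Ring A] {S : Set A} (hS : IsLeftDen S)
    (h0 : assSet S = {0}) {w : A}
    (hw : w ∈ Submonoid.closure (S ∪ {u : A | IsUnit u})) : IsRegular w := by
  induction hw using Submonoid.closure_induction with
  | mem x hx =>
    rcases hx with hx | hx
    · have hl : ∀ s ∈ S, ∀ r : A, s * r = 0 → r = 0 := fun s hs r h => by
        have : r ∈ assSet S := ⟨s, hs, h⟩
        simpa [h0] using this
      refine ⟨isLeftRegular_iff_right_eq_zero_of_mul.2 (hl x hx),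
        isRightRegular_iff_left_eq_zero_of_mul.2 fun r h => ?_⟩
      obtain ⟨t, ht, h'⟩ := hS.2 r x hx h
      exact hl t ht r h'
    · exact IsUnit.isRegular hx
  | one => exact isRegular_one
  | mul x y _ _ ihx ihy => exact ihx.mul ihy

/-- A left Ore submonoid of regular elements of `S⁻¹R` containing the units pulls back to a left
denominator set of `R` with the same `ass` as `S`. -/
theorem isLeftDen_preimage {R A : Type*} [Ring R] [Ring A] [Nontrivial A] {S : Set R} {f : R →+* A}
    (hf : IsLeftLocalization S f) (M : Submonoid A)
    (hreg : ∀ w ∈ M, IsRegular w) (hunit : ∀ u : A, IsUnit u → u ∈ M)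
    (hore : ∀ w ∈ M, ∀ r : A, ∃ r' : A, ∃ w' ∈ M, w' * r = r' * w) :
    IsLeftDen {r : R | f r ∈ M} ∧ assSet {r : R | f r ∈ M} = assSet S := by
  obtain ⟨hu, hfrac, hker⟩ := hf
  have hSM : ∀ s ∈ S, f s ∈ M := fun s hs => hunit _ (hu s hs)
  refine ⟨⟨⟨⟨?_, ?_, ?_⟩, ?_⟩, ?_⟩, ?_⟩
  · simp
  · intro h
    have h' := hreg _ h
    rw [map_zero] at h'
    exact h'.ne_zero rfl
  · intro s hs t ht
    simpa using mul_mem hs ht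
  · intro r v hv
    obtain ⟨b, w, hw, h⟩ := hore _ hv (f r)
    -- clear the denominators of `w` and then of `b`
    obtain ⟨s₁, hs₁, r₁, h₁⟩ := hfrac w
    obtain ⟨s₂, hs₂, r₂, h₂⟩ := hfrac (f s₁ * b)
    have hz : f (s₂ * r₁ * r - r₂ * v) = 0 := by
      rw [map_sub, map_mul, map_mul, map_mul, ← h₁, ← h₂, sub_eq_zero]
      simp only [mul_assoc, h]
    obtain ⟨s₃, hs₃, h₃⟩ := (hker _).1 hz
    refine ⟨s₃ * r₂, s₃ * (s₂ * r₁), ?_, ?_⟩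
    · have : f r₁ ∈ M := h₁ ▸ mul_mem (hSM _ hs₁) hw
      simpa using mul_mem (hSM _ hs₃) (mul_mem (hSM _ hs₂) this)
    · rw [mul_sub, sub_eq_zero] at h₃
      simpa only [mul_assoc] using h₃
  · intro r v hv h
    have hz : f r = 0 := by
      apply isRightRegular_iff_left_eq_zero_of_mul.1 (hreg _ hv).right
      rw [← map_mul, h, map_zero]
    obtain ⟨s, hs, h'⟩ := (hker _).1 hz
    exact ⟨s, hSM s hs, h'⟩
  · ext x
    constructor
    · rintro ⟨v, hv, h⟩
      apply (hker x).1
      apply isLeftRegular_iff_right_eq_zero_of_mul.1 (hreg _ hv).left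
      rw [← map_mul, h, map_zero]
    · rintro ⟨s, hs, h⟩
      exact ⟨s, hSM s hs, h⟩

/-- If `R → QA` is a left localization factoring through an injective `φ : A →+* QA`, then the
elements of `A` that become units in `QA` form a left denominator set with `ass = 0`. -/
theorem isLeftDen_isUnit_map {R A QA : Type*} [Ring R] [Ring A] [Ring QA] [Nontrivial QA]
    {T : Set R} {f : R →+* A} {φ : A →+* QA} (hg : IsLeftLocalization T (φ.comp f))
    (hinj : Function.Injective φ) :
    IsLeftDen {w : A | IsUnit (φ w)} ∧ assSet {w : A | IsUnit (φ w)} = {0} := by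
  obtain ⟨hu, hfrac, -⟩ := hg
  refine ⟨⟨⟨⟨?_, ?_, ?_⟩, ?_⟩, ?_⟩, ?_⟩
  · simp
  · simp
  · intro s hs t ht
    simpa using IsUnit.mul hs ht
  · rintro x w ⟨u, hw⟩
    obtain ⟨t, ht, r, h⟩ := hfrac (φ x * ↑u⁻¹)
    refine ⟨f r, f t, hu t ht, hinj ?_⟩
    rw [map_mul, map_mul, ← hw]
    have h' := congrArg (· * (u : QA)) h
    simpa [mul_assoc] using h'
  · intro r w hw h
    refine ⟨1, by simp, ?_⟩
    have h' : φ r * φ w = 0 := by rw [← map_mul, h, map_zero]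
    rw [one_mul]
    exact hinj (by rw [map_zero]; exact (IsUnit.mul_left_eq_zero hw).1 h')
  · ext x
    constructor
    · rintro ⟨w, hw, h⟩
      have h' : φ w * φ x = 0 := by rw [← map_mul, h, map_zero]
      exact hinj (by rw [map_zero]; exact (IsUnit.mul_right_eq_zero hw).1 h')
    · rintro rfl
      exact ⟨1, by simp, by simp⟩

/-- Theorem 3.13. Let `A = S⁻¹R` for some `S ∈ Den_l(R, a)` (with
localization map `f`), let `g : R →+* QA` be the localization of `R` at `S_a(R)` (so
`QA = Q_a(R)`), and let `φ : A →+* QA` be the natural homomorphism (`φ ∘ f = g`,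
induced by `S ⊆ S_a(R)`). Then `φ` is an isomorphism iff `Q_l(A) = A`, i.e. every
element of `S₀(A)` is a unit of `A`. -/
theorem localization_eq_largest_iff {R : Type u} [Ring R] (a : Set R) (S : Set R)
    (hS : IsLeftDen S ∧ assSet S = a)
    (A : Type u) [Ring A] (f : R →+* A) (hf : IsLeftLocalization S f)
    (QA : Type u) [Ring QA] (g : R →+* QA)
    (hg : IsLeftLocalization (largestLeftDen a) g)
    (φ : A →+* QA) (hφ : φ.comp f = g) :
    Function.Bijective φ ↔ ∀ x ∈ S0 A, IsUnit x := by
  subst hφ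
  obtain ⟨hSden, rfl⟩ := hS
  have hST : S ⊆ largestLeftDen (assSet S) := fun s hs => ⟨S, ⟨hSden, rfl⟩, hs⟩
  have hassT : assSet (largestLeftDen (assSet S)) ⊆ assSet S := by
    rintro x ⟨t, ⟨S₁, ⟨-, h₁⟩, ht⟩, hx⟩
    rw [← h₁]
    exact ⟨t, ht, hx⟩
  have hinj : Function.Injective φ := by
    rw [injective_iff_map_eq_zero]
    intro x hx
    obtain ⟨s, hs, r, h⟩ := hf.2.1 x
    have hr : φ.comp f r = 0 := by
      rw [RingHom.comp_apply, ← h, map_mul, hx, mul_zero]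
    have hr' : f r = 0 := (hf.2.2 r).2 (hassT ((hg.2.2 r).1 hr))
    rw [hr'] at h
    exact (IsUnit.mul_right_eq_zero (hf.1 s hs)).1 h
  have hA : Nontrivial A := by
    refine ⟨⟨1, 0, fun h => ?_⟩⟩
    rw [← map_one f] at h
    obtain ⟨s, hs, hs'⟩ := (hf.2.2 1).1 h
    rw [mul_one] at hs'
    exact hSden.1.1.2.1 (hs' ▸ hs)
  have hQ : Nontrivial QA := hinj.nontrivial
  constructor
  · rintro hbij x ⟨S', ⟨hS'den, hS'0⟩, hx⟩
    have hV := isLeftDen_preimage hf (Submonoid.closure (S' ∪ {u : A | IsUnit u}))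
      (fun w hw => closure_regular hS'den hS'0 hw)
      (fun u hu => Submonoid.subset_closure (Or.inr hu))
      (fun w hw r => closure_ore hS'den.1 hw r)
    obtain ⟨s, hs, r, h⟩ := hf.2.1 x
    have hr : f r ∈ Submonoid.closure (S' ∪ {u : A | IsUnit u}) := by
      rw [← h]
      exact mul_mem (Submonoid.subset_closure (Or.inr (hf.1 s hs)))
        (Submonoid.subset_closure (Or.inl hx))
    have hunit : IsUnit (φ (f r)) := hg.1 r ⟨_, hV, hr⟩
    have hfr : IsUnit (f r) :=
      (MulEquiv.isUnit_map (RingEquiv.ofBijective φ hbij)).1 hunit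
    rw [← h] at hfr
    obtain ⟨u, hu⟩ := hf.1 s hs
    rw [← hu] at hfr
    exact (Units.isUnit_units_mul u x).1 hfr
  · intro hS0
    refine ⟨hinj, fun q => ?_⟩
    obtain ⟨t, ht, r, h⟩ := hg.2.1 q
    have hft : IsUnit (f t) :=
      hS0 _ ⟨_, isLeftDen_isUnit_map hg hinj, hg.1 t ht⟩
    obtain ⟨u, hu⟩ := hft
    refine ⟨↑u⁻¹ * f r, (hg.1 t ht).mul_left_cancel ?_⟩
    rw [h, RingHom.comp_apply, RingHom.comp_apply, ← map_mul, ← hu, Units.mul_inv_cancel_left]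

end BavulaLQR
end

section
/- Let R be a ring and A a left localization of R, i.e. A = S⁻¹R for some S ∈ Den_l(R, a), a ∈ Ass_l(R). Then A ∈ maxLoc_l(R) (i.e. A ≅ T⁻¹R for some maximal left denominator set T of R) if and only if A is a left localization maximal ring, that is, Q_l(A) = A and Ass_l(A) = {0}. -/
/-! For a nontrivial ring `A` the condition `Q_l(A) = A`, `Ass_l(A) = {0}` says exactly that every
left denominator set of `A` consists of units (`leftLocMaximal_iff`). This form is then compared
with denominator sets of `R`.

If `A = T⁻¹R` with `T` maximal and `U` is a left denominator set of `A`, the composite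
`φ : R → A → U⁻¹A` is again a left localization, namely at the set `V` of all `r` with `φ r` a unit,
and `V` is a left denominator set (`IsLeftLocalization.comp`,
`IsLeftLocalization.isLeftDen_unitPreimage`). As `T ⊆ V`, maximality gives `V = T`. A left multiple
`g t * u` of `u ∈ U` by a unit has the form `g r` with `r ∈ V = T`, so `u` is a unit.

Conversely, if `A = S⁻¹R` has only units in its left denominator sets, take `T = {r | f r is a unit}`.
It is a left denominator set with localization `A`. A left denominator set `T' ⊇ T ⊇ S` of `R` has
as image in `A` a left denominator set (`IsLeftLocalization.isLeftDen_image`), hence a set of units,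
so it is contained in `T`, and `T` is maximal.
-/

/-! Basic notions from the paper "The largest left quotient ring of a ring"
(V. V. Bavula): multiplicative sets, left Ore sets, left denominator sets,
`ass S`, and an abstract characterization of the left Ore localization. -/

universe u

namespace BavulaLQR

section

variable {R A B : Type*} [Ring R] [Ring A] [Ring B]

/-- The set of elements of `R` that become units under `f`. -/
def unitPreimage (f : R →+* A) : Set R := {r | IsUnit (f r)}

theorem IsLeftLocalization.nontrivial_s14 {S : Set R} (h0 : (0 : R) ∉ S) {f : R →+* A}
    (hf : IsLeftLocalization S f) : Nontrivial A := by
  refine ⟨1, 0, fun h => ?_⟩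
  obtain ⟨s, hs, hs1⟩ := (hf.2.2 1).1 (by rw [map_one, h])
  rw [mul_one] at hs1
  exact h0 (hs1 ▸ hs)

/-- A localization at any set `S` is also the localization at the (larger) set of all elements
that become units. -/
theorem IsLeftLocalization.to_unitPreimage {S : Set R} {f : R →+* A}
    (hf : IsLeftLocalization S f) : IsLeftLocalization (unitPreimage f) f := by
  refine ⟨fun s hs => hs, fun q => ?_, fun r => ⟨fun h => ?_, ?_⟩⟩
  · obtain ⟨s, hs, r, h⟩ := hf.2.1 q
    exact ⟨s, hf.1 s hs, r, h⟩
  · obtain ⟨s, hs, h⟩ := (hf.2.2 r).1 h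
    exact ⟨s, hf.1 s hs, h⟩
  · rintro ⟨s, hs, h⟩
    have h1 : f s * f r = 0 := by rw [← map_mul, h, map_zero]
    exact (IsUnit.mul_right_eq_zero hs).1 h1

/-- The Ore condition comes from writing `f r * (f s)⁻¹` as a left fraction. -/
theorem IsLeftLocalization.isLeftDen_unitPreimage [Nontrivial A] {f : R →+* A}
    (hf : IsLeftLocalization (unitPreimage f) f) : IsLeftDen (unitPreimage f) := by
  have hmul : ∀ s ∈ unitPreimage f, ∀ t ∈ unitPreimage f, s * t ∈ unitPreimage f := by
    intro s hs t ht
    change IsUnit (f (s * t))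
    rw [map_mul]
    exact IsUnit.mul hs ht
  refine ⟨⟨⟨?_, ?_, hmul⟩, fun r s hs => ?_⟩, fun r s hs h => ?_⟩
  · change IsUnit (f 1)
    rw [map_one]
    exact isUnit_one
  · change ¬ IsUnit (f 0)
    rw [map_zero]
    exact not_isUnit_zero
  · obtain ⟨v, hv⟩ : IsUnit (f s) := hs
    obtain ⟨t, ht, r', h⟩ := hf.2.1 (f r * ↑v⁻¹)
    have h1 : f (t * r - r' * s) = 0 := by
      rw [map_sub, map_mul, map_mul, ← h, ← hv]
      simp [mul_assoc]
    obtain ⟨w, hw, h2⟩ := (hf.2.2 _).1 h1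
    refine ⟨w * r', w * t, hmul w hw t ht, ?_⟩
    rw [mul_sub, sub_eq_zero] at h2
    rw [mul_assoc, mul_assoc, h2]
  · have h1 : f r * f s = 0 := by rw [← map_mul, h, map_zero]
    exact (hf.2.2 r).1 ((IsUnit.mul_left_eq_zero hs).1 h1)

/-- Localizing a localization of `R` again gives a localization of `R`. -/
theorem IsLeftLocalization.comp {T : Set R} {g : R →+* A} (hg : IsLeftLocalization T g)
    {U : Set A} {h : A →+* B} (hh : IsLeftLocalization U h) :
    IsLeftLocalization (unitPreimage (h.comp g)) (h.comp g) := by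
  have unit_of : ∀ t ∈ T, ∀ u ∈ U, ∀ r, g t * u = g r → IsUnit (h (g r)) := by
    intro t ht u hu r hr
    rw [← hr, map_mul]
    exact ((hg.1 t ht).map h).mul (hh.1 u hu)
  refine ⟨fun s hs => hs, fun b => ?_, fun r => ⟨fun hr => ?_, ?_⟩⟩
  · -- Clear the denominators of `u` and of `a` in `b = (h u)⁻¹ * h a` one after the other.
    obtain ⟨u, hu, a, hb⟩ := hh.2.1 b
    obtain ⟨t, ht, r₁, h₁⟩ := hg.2.1 u
    obtain ⟨t₂, ht₂, r₂, h₂⟩ := hg.2.1 (g t * a)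
    refine ⟨t₂ * r₁, ?_, r₂, ?_⟩
    · change IsUnit (h (g (t₂ * r₁)))
      rw [map_mul, map_mul]
      exact ((hg.1 t₂ ht₂).map h).mul (unit_of t ht u hu r₁ h₁)
    · rw [RingHom.comp_apply, RingHom.comp_apply, ← h₂, map_mul, ← h₁]
      simp only [map_mul, mul_assoc, hb]
  · obtain ⟨u, hu, h0⟩ := (hh.2.2 _).1 hr
    obtain ⟨t, ht, r₁, h₁⟩ := hg.2.1 u
    obtain ⟨w, hw, h₂⟩ := (hg.2.2 (r₁ * r)).1 (by rw [map_mul, ← h₁, mul_assoc, h0, mul_zero])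
    refine ⟨w * r₁, ?_, by rw [mul_assoc, h₂]⟩
    change IsUnit (h (g (w * r₁)))
    rw [map_mul, map_mul]
    exact ((hg.1 w hw).map h).mul (unit_of t ht u hu r₁ h₁)
  · rintro ⟨s, hs, h0⟩
    have h1 : (h.comp g) s * (h.comp g) r = 0 := by rw [← map_mul, h0, map_zero]
    exact (IsUnit.mul_right_eq_zero hs).1 h1

/-- If `S ⊆ T'` are left denominator sets of `R`, the image of `T'` in `S⁻¹R` is a left
denominator set. -/
theorem IsLeftLocalization.isLeftDen_image {S : Set R} {f : R →+* A}
    (hf : IsLeftLocalization S f) {T' : Set R} (hT' : IsLeftDen T') (hST : S ⊆ T') :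
    IsLeftDen (f '' T') := by
  obtain ⟨⟨⟨h1, h0, hmul⟩, hore⟩, hcan⟩ := hT'
  refine ⟨⟨⟨⟨1, h1, map_one f⟩, ?_, ?_⟩, ?_⟩, ?_⟩
  · rintro ⟨t, ht, h⟩
    obtain ⟨s, hs, hst⟩ := (hf.2.2 t).1 h
    exact h0 (hst ▸ hmul s (hST hs) t ht)
  · rintro _ ⟨s, hs, rfl⟩ _ ⟨t, ht, rfl⟩
    exact ⟨s * t, hmul s hs t ht, map_mul f s t⟩
  · rintro a _ ⟨t, ht, rfl⟩
    obtain ⟨s, hs, r, h⟩ := hf.2.1 a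
    obtain ⟨r', t', ht', h'⟩ := hore r t ht
    refine ⟨f r', f (t' * s), ⟨_, hmul t' ht' s (hST hs), rfl⟩, ?_⟩
    rw [map_mul, mul_assoc, h, ← map_mul, h', map_mul]
  · rintro a _ ⟨t, ht, rfl⟩ hat
    obtain ⟨s, hs, r, h⟩ := hf.2.1 a
    obtain ⟨s', hs', h₁⟩ := (hf.2.2 (r * t)).1 (by rw [map_mul, ← h, mul_assoc, hat, mul_zero])
    obtain ⟨t'', ht'', h₂⟩ := hcan (s' * r) t ht (by rw [mul_assoc, h₁])
    refine ⟨f (t'' * (s' * s)), ⟨_, hmul _ ht'' _ (hmul _ (hST hs') _ (hST hs)), rfl⟩, ?_⟩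
    rw [map_mul, map_mul, mul_assoc, mul_assoc, h, ← map_mul, ← map_mul, h₂, map_zero]

theorem isLeftDen_one [Nontrivial A] : IsLeftDen ({1} : Set A) := by
  refine ⟨⟨⟨rfl, zero_ne_one, ?_⟩, ?_⟩, ?_⟩
  · rintro _ rfl _ rfl
    exact mul_one 1
  · rintro r _ rfl
    exact ⟨r, 1, rfl, by rw [one_mul, mul_one]⟩
  · rintro r _ rfl h
    exact ⟨1, rfl, by rwa [one_mul, ← mul_one r]⟩

theorem assSet_eq_zero_of_isUnit_s14 {U : Set A} (hU : IsLeftDen U) (h : ∀ u ∈ U, IsUnit u) :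
    assSet U = {0} := by
  ext r
  constructor
  · rintro ⟨u, hu, h0⟩
    exact (IsUnit.mul_right_eq_zero (h u hu)).1 h0
  · rintro rfl
    exact ⟨1, hU.1.1.1, mul_zero 1⟩

/-- A nontrivial ring is left localization maximal iff all its left denominator sets consist of
units. -/
theorem leftLocMaximal_iff [Nontrivial A] :
    (IsLeftLocalization (S0 A) (RingHom.id A) ∧
      {b : Set A | ∃ T : Set A, IsLeftDen T ∧ assSet T = b} = {({0} : Set A)}) ↔
    ∀ U : Set A, IsLeftDen U → ∀ u ∈ U, IsUnit u := by
  constructor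
  · rintro ⟨hloc, hass⟩ U hU u hu
    have h0 : assSet U ∈ ({({0} : Set A)} : Set (Set A)) := hass ▸ ⟨U, hU, rfl⟩
    exact hloc.1 u ⟨U, ⟨hU, h0⟩, hu⟩
  · intro h
    have hone : assSet ({1} : Set A) = {0} :=
      assSet_eq_zero_of_isUnit_s14 isLeftDen_one (h _ isLeftDen_one)
    have mem1 : (1 : A) ∈ S0 A := ⟨{1}, ⟨isLeftDen_one, hone⟩, rfl⟩
    have hunit : ∀ s ∈ S0 A, IsUnit s := by
      rintro s ⟨U, ⟨hU, -⟩, hs⟩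
      exact h U hU s hs
    refine ⟨⟨hunit, fun q => ⟨1, mem1, q, one_mul q⟩, fun r => ⟨fun hr => ?_, ?_⟩⟩, ?_⟩
    · exact ⟨1, mem1, (one_mul r).trans hr⟩
    · rintro ⟨s, hs, h0⟩
      exact (IsUnit.mul_right_eq_zero (hunit s hs)).1 h0
    · ext b
      constructor
      · rintro ⟨U, hU, rfl⟩
        exact assSet_eq_zero_of_isUnit_s14 hU (h U hU)
      · rintro rfl
        exact ⟨{1}, isLeftDen_one, hone⟩

end

open OreLocalization in
/-- Ore's theorem: the localization at a left denominator set exists. -/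
theorem IsLeftDen.exists_localization {A : Type u} [Ring A] {U : Set A} (hU : IsLeftDen U) :
    ∃ (B : Type u) (_ : Ring B) (h : A →+* B), IsLeftLocalization U h := by
  obtain ⟨⟨⟨h1, -, hmul⟩, hore⟩, hcan⟩ := hU
  let M : Submonoid A :=
    { carrier := U, one_mem' := h1, mul_mem' := fun {a b} ha hb => hmul a ha b hb }
  have hM : Nonempty (OreSet M) := by
    rw [nonempty_oreSet_iff]
    refine ⟨fun r₁ r₂ s h => ?_, fun r s => ?_⟩
    · obtain ⟨t, ht, h'⟩ := hcan (r₁ - r₂) s s.2 (by rw [sub_mul, h, sub_self])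
      exact ⟨⟨t, ht⟩, by rwa [mul_sub, sub_eq_zero] at h'⟩
    · obtain ⟨r', s', hs', h⟩ := hore r s s.2
      exact ⟨r', ⟨s', hs'⟩, h⟩
  obtain ⟨_⟩ := hM
  refine ⟨OreLocalization M A, inferInstance, numeratorRingHom, ?_, ?_, ?_⟩
  · intro s hs
    exact numerator_isUnit (⟨s, hs⟩ : M)
  · intro q
    induction q using OreLocalization.ind with
    | _ r s => exact ⟨s, s.2, r, OreLocalization.mul_cancel (s := s) (t := 1)⟩
  · intro r
    change r /ₒ (1 : M) = 0 ↔ _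
    rw [OreLocalization.zero_def, oreDiv_eq_iff]
    constructor
    · rintro ⟨u, v, h, h'⟩
      refine ⟨u, u.2, ?_⟩
      have hv : (u : A) = v := by simpa using h'
      have hr : (0 : A) = v * r := by simpa using h
      rw [hv, ← hr]
    · rintro ⟨u, hu, h⟩
      exact ⟨⟨u, hu⟩, u, by simp [h], rfl⟩

/-- Theorem 3.14. Let `A = S⁻¹R` be a left localization of `R`
(`S ∈ Den_l(R, a)`). Then `A` is a maximal left quotient ring of `R` (i.e. `A` is a
localization of `R` at some maximal left denominator set) iff `A` is a left
localization maximal ring, i.e. `Q_l(A) = A` and `Ass_l(A) = {0}`. -/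
theorem maximal_left_localization_criterion {R : Type u} [Ring R] (a : Set R)
    (S : Set R) (hS : IsLeftDen S ∧ assSet S = a)
    (A : Type u) [Ring A] (f : R →+* A) (hf : IsLeftLocalization S f) :
    (∃ T : Set R, (IsLeftDen T ∧ ∀ T' : Set R, IsLeftDen T' → T ⊆ T' → T' = T) ∧
      ∃ g : R →+* A, IsLeftLocalization T g) ↔
    (IsLeftLocalization (S0 A) (RingHom.id A) ∧
      {b : Set A | ∃ T : Set A, IsLeftDen T ∧ assSet T = b} = {({0} : Set A)}) := by
  have : Nontrivial A := hf.nontrivial_s14 hS.1.1.1.2.1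
  rw [leftLocMaximal_iff]
  constructor
  · rintro ⟨T, ⟨-, hmax⟩, g, hg⟩ U hU u hu
    obtain ⟨B, _, h, hh⟩ := hU.exists_localization
    have : Nontrivial B := hh.nontrivial_s14 hU.1.1.2.1
    have hVT : unitPreimage (h.comp g) = T :=
      hmax _ (hg.comp hh).isLeftDen_unitPreimage fun t ht => (hg.1 t ht).map h
    obtain ⟨t, ht, r, hr⟩ := hg.2.1 u
    have hrT : r ∈ T := by
      rw [← hVT]
      change IsUnit (h (g r))
      rw [← hr, map_mul]
      exact ((hg.1 t ht).map h).mul (hh.1 u hu)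
    obtain ⟨v, hv⟩ := hg.1 t ht
    have hvu : IsUnit (↑v * u) := by
      rw [hv, hr]
      exact hg.1 r hrT
    exact (Units.isUnit_units_mul v u).1 hvu
  · intro hunits
    refine ⟨unitPreimage f, ⟨hf.to_unitPreimage.isLeftDen_unitPreimage, fun T' hT' hsub => ?_⟩,
      f, hf.to_unitPreimage⟩
    refine Set.Subset.antisymm (fun t ht => ?_) hsub
    have himg := hf.isLeftDen_image hT' fun s hs => hsub (hf.1 s hs)
    exact hunits _ himg (f t) ⟨t, ht, rfl⟩

end BavulaLQR
end

section
/- Let R be a ring, a₁, a₂ ∈ Ass_l(R), and σ_i: R → Q_{a_i}(R), r ↦ r/1, the structure maps for i = 1, 2. Then S_{a₁}(R) ⊆ S_{a₂}(R) if and only if a₁ ⊆ a₂ and σ₂(S_{a₁}(R)) ⊆ Q_{a₂}(R)*, the group of units of Q_{a₂}(R). -/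
/-!
The key fact is that, for a localization `σ : R → Q` of `R` at `S_a(R)`, the full preimage
`σ⁻¹(Q*)` of the units is again a left denominator set with `ass = a`. By maximality it is contained
in `S_a(R)`, so an element of `R` whose image in `Q` is a unit lies in `S_a(R)`. Applied to
`σ₂`, this gives the nontrivial implication; the other one is the monotonicity of `ass` together
with the invertibility of `σ₂(S_{a₂}(R))`.
-/


/-! Basic notions from the paper "The largest left quotient ring of a ring"
(V. V. Bavula): multiplicative sets, left Ore sets, left denominator sets,
`ass S`, and an abstract characterization of the left Ore localization. -/

universe u

namespace BavulaLQR

/-- `ass (S_a(R)) ⊆ a`, since each member of `S_a(R)` lies in a denominator set with `ass = a`. -/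
lemma assSet_largestLeftDen_subset {R : Type*} [Ring R] (a : Set R) :
    assSet (largestLeftDen a) ⊆ a := by
  rintro r ⟨s, ⟨S, ⟨-, rfl⟩, hs⟩, hr⟩
  exact ⟨s, hs, hr⟩

lemma subset_assSet_largestLeftDen {R : Type*} [Ring R] {a : Set R}
    (ha : ∃ S : Set R, IsLeftDen S ∧ assSet S = a) :
    a ⊆ assSet (largestLeftDen a) := by
  obtain ⟨S, hS, rfl⟩ := ha
  rintro r ⟨s, hs, hr⟩
  exact ⟨s, ⟨S, ⟨hS, rfl⟩, hs⟩, hr⟩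

/-- The preimage of the units of `Q_a(R)` is a left denominator set with `ass = a`, hence is
contained in `S_a(R)`. -/
lemma mem_largestLeftDen_of_isUnit {R Q : Type*} [Ring R] [Ring Q] {a : Set R}
    (ha : ∃ S : Set R, IsLeftDen S ∧ assSet S = a) {σ : R →+* Q}
    (h : IsLeftLocalization (largestLeftDen a) σ) {x : R} (hx : IsUnit (σ x)) :
    x ∈ largestLeftDen a := by
  obtain ⟨hu, hfrac, hker⟩ := h
  refine ⟨{r | IsUnit (σ r)}, ⟨⟨⟨⟨?_, ?_, ?_⟩, ?_⟩, ?_⟩, ?_⟩, hx⟩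
  · simp
  ·
    -- If `0` were a unit then `σ 1 = 0`, so `s * 1 = 0` for some `s` in a multiplicative set.
    intro h0
    have h10 : (1 : Q) = 0 := by
      have h0' : IsUnit (0 : Q) := by simpa using h0
      exact (isUnit_zero_iff.mp h0').symm
    obtain ⟨s, ⟨S, ⟨hS, -⟩, hs⟩, hs1⟩ := (hker 1).mp (by rw [map_one, h10])
    rw [mul_one] at hs1
    exact hS.1.1.2.1 (hs1 ▸ hs)
  · intro s hs t ht
    simpa using IsUnit.mul hs ht
  ·
    -- Write `σ r * (σ t)⁻¹` as a left fraction `(σ s)⁻¹ * σ r'` and clear the kernel of `σ`.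
    intro r t ht
    obtain ⟨u, hut⟩ : IsUnit (σ t) := ht
    obtain ⟨s, hs, r', hr'⟩ := hfrac (σ r * ↑u⁻¹)
    have hz : σ (s * r - r' * t) = 0 := by
      rw [map_sub, map_mul, map_mul, ← hr', ← hut]
      simp [mul_assoc]
    obtain ⟨s', hs', h0⟩ := (hker _).mp hz
    refine ⟨s' * r', s' * s, ?_, ?_⟩
    · simpa using (hu s' hs').mul (hu s hs)
    · rw [mul_sub, sub_eq_zero] at h0
      simpa [mul_assoc] using h0
  · intro r t ht hrt
    have hr : σ r = 0 := by
      have h0 : σ r * σ t = 0 := by rw [← map_mul, hrt, map_zero]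
      exact (IsUnit.mul_left_eq_zero ht).mp h0
    obtain ⟨s, hs, h0⟩ := (hker r).mp hr
    exact ⟨s, hu s hs, h0⟩
  · apply Set.Subset.antisymm
    · rintro r ⟨t, ht, htr⟩
      have h0 : σ t * σ r = 0 := by rw [← map_mul, htr, map_zero]
      exact assSet_largestLeftDen_subset a ((hker r).mp ((IsUnit.mul_right_eq_zero ht).mp h0))
    · intro r hr
      obtain ⟨s, hs, h0⟩ := subset_assSet_largestLeftDen ha hr
      exact ⟨s, hu s hs, h0⟩

/-- Corollary 3.15. Let `a₁, a₂ ∈ Ass_l(R)` with localizations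
`σᵢ : R →+* Qᵢ` of `R` at `S_{aᵢ}(R)` (so `Qᵢ = Q_{aᵢ}(R)`). Then
`S_{a₁}(R) ⊆ S_{a₂}(R)` iff `a₁ ⊆ a₂` and `σ₂(S_{a₁}(R)) ⊆ Q₂*`. -/
theorem largest_denominator_sets_subset_iff {R : Type u} [Ring R] (a₁ a₂ : Set R)
    (ha₁ : ∃ S : Set R, IsLeftDen S ∧ assSet S = a₁)
    (ha₂ : ∃ S : Set R, IsLeftDen S ∧ assSet S = a₂)
    (Q₁ : Type u) [Ring Q₁] (σ₁ : R →+* Q₁)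
    (h₁ : IsLeftLocalization (largestLeftDen a₁) σ₁)
    (Q₂ : Type u) [Ring Q₂] (σ₂ : R →+* Q₂)
    (h₂ : IsLeftLocalization (largestLeftDen a₂) σ₂) :
    largestLeftDen a₁ ⊆ largestLeftDen a₂ ↔
      (a₁ ⊆ a₂ ∧ ∀ s ∈ largestLeftDen a₁, IsUnit (σ₂ s)) := by
  constructor
  · intro hsub
    refine ⟨fun r hr => ?_, fun s hs => h₂.1 s (hsub hs)⟩
    obtain ⟨s, hs, h0⟩ := subset_assSet_largestLeftDen ha₁ hr
    exact assSet_largestLeftDen_subset a₂ ⟨s, hsub hs, h0⟩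
  · rintro ⟨-, hunit⟩ s hs
    exact mem_largestLeftDen_of_isUnit ha₂ h₂ (hunit s hs)

end BavulaLQR
end

section
/- Let R be a ring and S a left and right Ore set in R. Then the set J(R, S) of two-sided ideals a of R such that the image of S in R/a is a left and right denominator set of R/a with ass = 0 is nonempty, and J(R, S) has a least element with respect to inclusion. Moreover, if S is itself a left and right denominator set of R with ass(S) = a, then this least element equals a. -/
/-!
The least element of `J(R, S)` is explicit: it is `biAss S = {r | ∃ s t ∈ S, s * r * t = 0}`.
The Ore conditions on both sides provide common left and right multiples in `S`, which make this
set a two-sided ideal. It avoids `S` because `s * u * t ∈ S` for `s, u, t ∈ S` while `0 ∉ S`, and it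
is visibly saturated: `s * r ∈ biAss S` or `r * s ∈ biAss S` forces `r ∈ biAss S`. These two
facts say exactly that `biAss S` lies in `J(R, S)` (`memJ_biAss`). Conversely, when `S` has
regular image in `R / I`, the relation `s * r * t = 0` forces `r ∈ I`, so `biAss S` is least
(`biAss_le`). If `S` is a left denominator set, then `(s * r) * t = 0` gives `u * (s * r) = 0` for
some `u ∈ S`, and `biAss S` reduces to `assSet S`.
-/

/-! Basic notions from the paper "The largest left quotient ring of a ring"
(V. V. Bavula): multiplicative sets, left Ore sets, left denominator sets,
`ass S`, and an abstract characterization of the left Ore localization. -/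

universe u

namespace BavulaLQR

/-- A two-sided ideal `I` of `R` belongs to `J(R, S)` if the image of `S` in `R/I`
is a left and right denominator set of `R/I` with `ass = 0`. -/
def memJ {R : Type u} [Ring R] (S : Set R) (I : TwoSidedIdeal R) : Prop :=
  IsLeftDen (⇑I.ringCon.mk' '' S) ∧ IsRightDen (⇑I.ringCon.mk' '' S) ∧
  assSet (⇑I.ringCon.mk' '' S) = ({0} : Set I.ringCon.Quotient) ∧
  assRSet (⇑I.ringCon.mk' '' S) = ({0} : Set I.ringCon.Quotient)

theorem mk'_eq_zero_iff {R : Type u} [Ring R] (I : TwoSidedIdeal R) (r : R) :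
    I.ringCon.mk' r = 0 ↔ r ∈ I := by
  rw [TwoSidedIdeal.mem_iff, ← RingCon.eq]
  rfl

/-- Two elements of a left Ore set have a common left multiple in the set. -/
theorem IsLeftOre.common {R : Type u} [Ring R] {S : Set R} (h : IsLeftOre S) {s t : R}
    (hs : s ∈ S) (ht : t ∈ S) : ∃ w ∈ S, (∃ x, w = x * s) ∧ ∃ y, w = y * t := by
  obtain ⟨x, y, hy, e⟩ := h.2 t s hs
  exact ⟨y * t, h.1.2.2 y hy t ht, ⟨x, e⟩, y, rfl⟩

/-- Two elements of a right Ore set have a common right multiple in the set. -/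
theorem IsRightOre.common {R : Type u} [Ring R] {S : Set R} (h : IsRightOre S) {s t : R}
    (hs : s ∈ S) (ht : t ∈ S) : ∃ w ∈ S, (∃ x, w = s * x) ∧ ∃ y, w = t * y := by
  obtain ⟨x, y, hy, e⟩ := h.2 t s hs
  exact ⟨t * y, h.1.2.2 t ht y hy, ⟨x, e⟩, y, rfl⟩

/-- The two-sided ideal of elements annihilated by simultaneous left and right multiplication by
elements of a left and right Ore set `S`. -/
def biAss {R : Type u} [Ring R] (S : Set R) (hl : IsLeftOre S) (hr : IsRightOre S) :
    TwoSidedIdeal R :=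
  TwoSidedIdeal.mk' {r : R | ∃ s ∈ S, ∃ t ∈ S, s * r * t = 0}
    ⟨1, hl.1.1, 1, hl.1.1, by simp⟩
    (by
      rintro a b ⟨s, hs, t, ht, h⟩ ⟨s', hs', t', ht', h'⟩
      obtain ⟨w, hw, ⟨x, hx⟩, y, hy⟩ := hl.common hs hs'
      obtain ⟨v, hv, ⟨p, hp⟩, q, hq⟩ := hr.common ht ht'
      refine ⟨w, hw, v, hv, ?_⟩
      have h1 : w * a * v = 0 := by
        rw [hx, hp, show x * s * a * (t * p) = x * (s * a * t) * p by noncomm_ring, h]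
        simp
      have h2 : w * b * v = 0 := by
        rw [hy, hq, show y * s' * b * (t' * q) = y * (s' * b * t') * q by noncomm_ring, h']
        simp
      rw [mul_add, add_mul, h1, h2, add_zero])
    (by
      rintro a ⟨s, hs, t, ht, h⟩
      exact ⟨s, hs, t, ht, by simp [h]⟩)
    (by
      rintro x a ⟨s, hs, t, ht, h⟩
      obtain ⟨x', s', hs', e⟩ := hl.2 x s hs
      refine ⟨s', hs', t, ht, ?_⟩
      rw [← mul_assoc, e, show x' * s * a * t = x' * (s * a * t) by noncomm_ring, h, mul_zero])
    (by
      rintro a x ⟨s, hs, t, ht, h⟩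
      obtain ⟨x', t', ht', e⟩ := hr.2 x t ht
      refine ⟨s, hs, t', ht', ?_⟩
      rw [show s * (a * x) * t' = s * a * (x * t') by noncomm_ring, e, ← mul_assoc, h, zero_mul])

theorem mem_biAss {R : Type u} [Ring R] {S : Set R} {hl : IsLeftOre S} {hr : IsRightOre S}
    {r : R} : r ∈ biAss S hl hr ↔ ∃ s ∈ S, ∃ t ∈ S, s * r * t = 0 := by
  simp [biAss]

/-- An ideal modulo which `S` is regular contains `biAss S`. -/
theorem biAss_le {R : Type u} [Ring R] {S : Set R} (hl : IsLeftOre S) (hr : IsRightOre S)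
    {I : TwoSidedIdeal R} (hI : memJ S I) : biAss S hl hr ≤ I := by
  intro r h
  obtain ⟨s, hs, t, ht, h⟩ := mem_biAss.1 h
  obtain ⟨-, -, h1, h2⟩ := hI
  rw [← mk'_eq_zero_iff]
  have e : I.ringCon.mk' s * I.ringCon.mk' r * I.ringCon.mk' t = 0 := by
    rw [← map_mul, ← map_mul, h, map_zero]
  have a : I.ringCon.mk' s * I.ringCon.mk' r ∈ assRSet (⇑I.ringCon.mk' '' S) :=
    ⟨_, ⟨t, ht, rfl⟩, e⟩
  rw [h2] at a
  have b : I.ringCon.mk' r ∈ assSet (⇑I.ringCon.mk' '' S) := ⟨_, ⟨s, hs, rfl⟩, a⟩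
  rw [h1] at b
  exact b

theorem memJ_biAss {R : Type u} [Ring R] {S : Set R} (hl : IsLeftOre S) (hr : IsRightOre S) :
    memJ S (biAss S hl hr) := by
  set I := biAss S hl hr with hI
  have hsurj : Function.Surjective I.ringCon.mk' := I.ringCon.mk'_surjective
  have hone : (1 : I.ringCon.Quotient) ∈ ⇑I.ringCon.mk' '' S := ⟨1, hl.1.1, map_one _⟩
  have hmul : IsMulSet (⇑I.ringCon.mk' '' S) := by
    refine ⟨hone, ?_, ?_⟩
    · rintro ⟨u, hu, h⟩
      obtain ⟨s, hs, t, ht, h⟩ := mem_biAss.1 ((mk'_eq_zero_iff I u).1 h)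
      exact hl.1.2.1 (h ▸ hl.1.2.2 _ (hl.1.2.2 s hs u hu) t ht)
    · rintro _ ⟨s, hs, rfl⟩ _ ⟨t, ht, rfl⟩
      exact ⟨s * t, hl.1.2.2 s hs t ht, map_mul _ _ _⟩
  -- the image of `S` consists of regular elements of `R / I`
  have hleft : ∀ r, ∀ s ∈ ⇑I.ringCon.mk' '' S, s * r = 0 → r = 0 := by
    rintro r _ ⟨s, hs, rfl⟩ h
    obtain ⟨r, rfl⟩ := hsurj r
    rw [← map_mul, mk'_eq_zero_iff] at h
    obtain ⟨s', hs', t, ht, h⟩ := mem_biAss.1 h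
    exact (mk'_eq_zero_iff I r).2
      (mem_biAss.2 ⟨s' * s, hl.1.2.2 s' hs' s hs, t, ht, by rw [mul_assoc s', h]⟩)
  have hright : ∀ r, ∀ s ∈ ⇑I.ringCon.mk' '' S, r * s = 0 → r = 0 := by
    rintro r _ ⟨t, ht, rfl⟩ h
    obtain ⟨r, rfl⟩ := hsurj r
    rw [← map_mul, mk'_eq_zero_iff] at h
    obtain ⟨s, hs, t', ht', h⟩ := mem_biAss.1 h
    exact (mk'_eq_zero_iff I r).2
      (mem_biAss.2 ⟨s, hs, t * t', hl.1.2.2 t ht t' ht', by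
        rw [← h]; noncomm_ring⟩)
  refine ⟨⟨⟨hmul, ?_⟩, ?_⟩, ⟨⟨hmul, ?_⟩, ?_⟩, ?_, ?_⟩
  · rintro r _ ⟨s, hs, rfl⟩
    obtain ⟨r, rfl⟩ := hsurj r
    obtain ⟨r', s', hs', e⟩ := hl.2 r s hs
    exact ⟨_, _, ⟨s', hs', rfl⟩, by rw [← map_mul, e, map_mul]⟩
  · exact fun r s hs h => ⟨1, hone, by rw [hright r s hs h, mul_zero]⟩
  · rintro r _ ⟨s, hs, rfl⟩
    obtain ⟨r, rfl⟩ := hsurj r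
    obtain ⟨r', s', hs', e⟩ := hr.2 r s hs
    exact ⟨_, _, ⟨s', hs', rfl⟩, by rw [← map_mul, e, map_mul]⟩
  · exact fun r s hs h => ⟨1, hone, by rw [hleft r s hs h, zero_mul]⟩
  · ext r
    exact ⟨fun ⟨s, hs, h⟩ => hleft r s hs h, fun h => ⟨1, hone, by rw [h, mul_zero]⟩⟩
  · ext r
    exact ⟨fun ⟨s, hs, h⟩ => hright r s hs h, fun h => ⟨1, hone, by rw [h, zero_mul]⟩⟩

/-- Theorem 4.10. Every left and right Ore set `S` of `R` is
localizable: `J(R, S)` is nonempty and has a least element; moreover if `S` is itself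
a left and right denominator set with `ass S = a`, then the least element equals `a`. -/
theorem two_sided_ore_localizable {R : Type u} [Ring R] (S : Set R)
    (hl : IsLeftOre S) (hr : IsRightOre S) :
    (∃ I : TwoSidedIdeal R, memJ S I) ∧
    (∃ I₀ : TwoSidedIdeal R, memJ S I₀ ∧ ∀ I : TwoSidedIdeal R, memJ S I → I₀ ≤ I) ∧
    (∀ I₀ : TwoSidedIdeal R, memJ S I₀ → (∀ I : TwoSidedIdeal R, memJ S I → I₀ ≤ I) →
      IsLeftDen S → IsRightDen S → (I₀ : Set R) = assSet S) := by
  refine ⟨⟨_, memJ_biAss hl hr⟩, ⟨_, memJ_biAss hl hr, fun I => biAss_le hl hr⟩, ?_⟩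
  intro I₀ h₀ hmin hden _
  have e : I₀ = biAss S hl hr := le_antisymm (hmin _ (memJ_biAss hl hr)) (biAss_le hl hr h₀)
  subst e
  ext r
  rw [SetLike.mem_coe, mem_biAss]
  constructor
  · rintro ⟨s, hs, t, ht, h⟩
    obtain ⟨u, hu, h⟩ := hden.2 (s * r) t ht h
    exact ⟨u * s, hl.1.2.2 u hu s hs, by rw [mul_assoc, h]⟩
  · rintro ⟨s, hs, h⟩
    exact ⟨s, hs, 1, hl.1.1, by rw [h, zero_mul]⟩

end BavulaLQR
end
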